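/- Let α ∈ (0,1) and let s ≥ 1 be an integer with s < 1/α − 1. Fix a sequence p : ℕ → ℕ with p(n) → ∞ and p(n)/n → α as n → ∞. Then (1/p(n))·E[tr(Y^{−s})] → ∫_{α₋}^{α₊} √((α₊ − t)·(t − α₋))/(2·π·α·t^{s+1}) dt as n → ∞, where α₊ = (1+√α)², α₋ = (1−√α)², and the expectation is with respect to μ_{n,p(n)}. -/

import Mathlib

open MeasureTheory Matrix Filter

noncomputable section

/-- The law `μ_{n,p}` of an `n × p` matrix with independent standard Gaussian entries. -/
def gaussEnsemble (n p : ℕ) : Measure (Fin n → Fin p → ℝ) :=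
  Measure.pi fun _ => Measure.pi fun _ => ProbabilityTheory.gaussianReal 0 1

/-- `Y(Z) = (1/n) Zᵀ Z`, the Wishart matrix `W_p(n, I_p/n)` built from the Gaussian matrix `Z`. -/
def wishartOf {n p : ℕ} (Z : Fin n → Fin p → ℝ) : Matrix (Fin p) (Fin p) ℝ :=
  (n : ℝ)⁻¹ • ((Matrix.of Z)ᵀ * Matrix.of Z)

/-! ### Gaussian integration by parts -/

section GaussianIntegrationByParts

open ProbabilityTheory

/-- Stein's identity for the standard Gaussian on the line. -/
theorem integral_id_mul_gaussianReal {f f' : ℝ → ℝ} (hd : ∀ x, HasDerivAt f (f' x) x)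
    (hf : Integrable f (gaussianReal 0 1)) (hf' : Integrable f' (gaussianReal 0 1))
    (hxf : Integrable (fun x => x * f x) (gaussianReal 0 1)) :
    ∫ x, x * f x ∂gaussianReal 0 1 = ∫ x, f' x ∂gaussianReal 0 1 := by
  have key : ∀ g : ℝ → ℝ, Integrable g (gaussianReal 0 1) →
      Integrable (fun x => gaussianPDFReal 0 1 x * g x) := by
    intro g hg
    rw [gaussianReal_of_var_ne_zero _ one_ne_zero,
      integrable_withDensity_iff_integrable_smul₀' (by fun_prop)
        (by simp [gaussianPDF])] at hg
    simpa [toReal_gaussianPDF] using hg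
  have hφ : ∀ x, HasDerivAt (gaussianPDFReal 0 1) (-(x * gaussianPDFReal 0 1 x)) x := by
    intro x
    have h1 : HasDerivAt (fun x : ℝ => -(x - 0) ^ 2 / (2 * (1 : NNReal))) (-x) x :=
      ((((hasDerivAt_id x).sub_const 0).pow 2).neg.div_const (2 * ((1 : NNReal) : ℝ))).congr_deriv
        (by simp; ring)
    exact (h1.exp.const_mul (√(2 * Real.pi * (1 : NNReal)))⁻¹).congr_deriv
      (by rw [gaussianPDFReal]; ring)
  rw [integral_gaussianReal_eq_integral_smul one_ne_zero,
    integral_gaussianReal_eq_integral_smul one_ne_zero]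
  simp only [smul_eq_mul]
  have := integral_mul_deriv_eq_deriv_mul_of_integrable (u := f) (v := gaussianPDFReal 0 1)
    (u' := f') (v' := fun x => -(x * gaussianPDFReal 0 1 x))
    (fun x _ => hd x) (fun x _ => hφ x)
    (by
      refine (key _ hxf).neg.congr (Eventually.of_forall fun x => ?_)
      simp only [Pi.neg_apply, Pi.mul_apply]; ring)
    (by
      refine (key _ hf').congr (Eventually.of_forall fun x => ?_)
      simp only [Pi.mul_apply]; ring)
    (by
      refine (key _ hf).congr (Eventually.of_forall fun x => ?_)
      simp only [Pi.mul_apply]; ring)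
  have e1 : ∫ x, gaussianPDFReal 0 1 x * (x * f x) =
      - ∫ x, f x * -(x * gaussianPDFReal 0 1 x) := by
    rw [← integral_neg]; congr 1; ext x; ring
  rw [e1, this, neg_neg]
  congr 1; ext x; ring

section Resample

variable {ι : Type*} [DecidableEq ι] {E : Type*} [MeasurableSpace E]

theorem measurable_update_prod (i : ι) :
    Measurable (fun q : (ι → E) × E => Function.update q.1 i q.2) := by
  rw [measurable_pi_iff]
  intro k
  by_cases h : k = i
  · subst h; simpa using measurable_snd
  · simp only [Function.update_of_ne h]; fun_prop

variable [Fintype ι]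

/-- Resampling one coordinate of a product probability measure preserves it. -/
theorem measurePreserving_update (μ : ι → Measure E) [∀ i, IsProbabilityMeasure (μ i)] (i : ι) :
    MeasurePreserving (fun q : (ι → E) × E => Function.update q.1 i q.2)
      ((Measure.pi μ).prod (μ i)) (Measure.pi μ) := by
  refine ⟨measurable_update_prod i, ?_⟩
  symm
  refine Measure.pi_eq fun s hs => ?_
  rw [Measure.map_apply (measurable_update_prod i) (MeasurableSet.univ_pi hs)]
  have : (fun q : (ι → E) × E => Function.update q.1 i q.2) ⁻¹' (Set.univ.pi s) =
      (Set.univ.pi (Function.update s i Set.univ)) ×ˢ s i := by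
    ext ⟨z, x⟩
    simp only [Set.mem_preimage, Set.mem_pi, Set.mem_univ, true_implies, Set.mem_prod]
    constructor
    · intro h
      refine ⟨fun k => ?_, by simpa using h i⟩
      by_cases hk : k = i
      · subst hk; simp
      · simpa [Function.update_of_ne hk] using h k
    · rintro ⟨h1, h2⟩ k
      by_cases hk : k = i
      · subst hk; simpa using h2
      · simpa [Function.update_of_ne hk] using h1 k
  rw [this, Measure.prod_prod, Measure.pi_pi, ← Finset.prod_erase_mul _ _ (Finset.mem_univ i),
    ← Finset.prod_erase_mul Finset.univ (fun i => μ i (s i)) (Finset.mem_univ i)]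
  simp only [Function.update_self, measure_univ, mul_one]
  congr 1
  refine Finset.prod_congr rfl fun k hk => ?_
  rw [Function.update_of_ne (Finset.ne_of_mem_erase hk)]

theorem integrable_comp_update {μ : ι → Measure E} [∀ i, IsProbabilityMeasure (μ i)] (i : ι)
    {f : (ι → E) → ℝ} (hf : Integrable f (Measure.pi μ)) :
    Integrable (fun q : (ι → E) × E => f (Function.update q.1 i q.2))
      ((Measure.pi μ).prod (μ i)) :=
  (measurePreserving_update μ i).integrable_comp_of_integrable hf

theorem integral_update {μ : ι → Measure E} [∀ i, IsProbabilityMeasure (μ i)] (i : ι)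
    {f : (ι → E) → ℝ} (hf : Integrable f (Measure.pi μ)) :
    ∫ z, f z ∂Measure.pi μ = ∫ z, ∫ x, f (Function.update z i x) ∂μ i ∂Measure.pi μ := by
  rw [← integral_prod _ (integrable_comp_update i hf)]
  have h := (measurePreserving_update μ i)
  rw [← h.map_eq, integral_map h.measurable.aemeasurable (by rw [h.map_eq]; exact hf.1), h.map_eq]

end Resample

/-- Gaussian integration by parts in one coordinate of a standard Gaussian vector. -/
theorem integral_coord_mul_gaussian_vector {p : ℕ} (j : Fin p) {f f' : (Fin p → ℝ) → ℝ}
    (hd : ∀ z, HasDerivAt (fun x => f (Function.update z j x)) (f' z) (z j))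
    (hf : Integrable f (Measure.pi fun _ => gaussianReal 0 1))
    (hf' : Integrable f' (Measure.pi fun _ => gaussianReal 0 1))
    (hxf : Integrable (fun z => z j * f z) (Measure.pi fun _ => gaussianReal 0 1)) :
    ∫ z, z j * f z ∂(Measure.pi fun _ => gaussianReal 0 1) =
      ∫ z, f' z ∂(Measure.pi fun _ => gaussianReal 0 1) := by
  rw [integral_update j hxf, integral_update j hf']
  refine integral_congr_ae ?_
  filter_upwards [(integrable_comp_update j hf).prod_right_ae,
    (integrable_comp_update j hf').prod_right_ae,
    (integrable_comp_update j hxf).prod_right_ae] with z h1 h2 h3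
  simp only [Function.update_self] at h3 ⊢
  refine integral_id_mul_gaussianReal (fun x => ?_) h1 h2 h3
  simpa using hd (Function.update z j x)

/-- Gaussian integration by parts in one entry of the Gaussian ensemble. -/
theorem integral_entry_mul_gaussEnsemble {n p : ℕ} (i : Fin n) (j : Fin p)
    {f f' : (Fin n → Fin p → ℝ) → ℝ}
    (hd : ∀ Z, HasDerivAt (fun x => f (Function.update Z i (Function.update (Z i) j x)))
      (f' Z) (Z i j))
    (hf : Integrable f (gaussEnsemble n p)) (hf' : Integrable f' (gaussEnsemble n p))
    (hxf : Integrable (fun Z => Z i j * f Z) (gaussEnsemble n p)) :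
    ∫ Z, Z i j * f Z ∂gaussEnsemble n p = ∫ Z, f' Z ∂gaussEnsemble n p := by
  unfold gaussEnsemble at *
  rw [integral_update i hxf, integral_update i hf']
  refine integral_congr_ae ?_
  filter_upwards [(integrable_comp_update i hf).prod_right_ae,
    (integrable_comp_update i hf').prod_right_ae,
    (integrable_comp_update i hxf).prod_right_ae] with Z h1 h2 h3
  simp only [Function.update_self] at h3 ⊢
  refine integral_coord_mul_gaussian_vector j (fun r => ?_) h1 h2 h3
  simpa using hd (Function.update Z i r)

end GaussianIntegrationByParts

/-! ### The resolvent of a Wishart matrix -/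

/-- The resolvent `(Y(Z) + δ)⁻¹` of the Wishart matrix. -/
def wishartResolvent {n p : ℕ} (δ : ℝ) (Z : Fin n → Fin p → ℝ) : Matrix (Fin p) (Fin p) ℝ :=
  (wishartOf Z + δ • 1)⁻¹

/-- The normalised trace `p⁻¹ tr (Y(Z) + δ)^{-k}`. -/
def resolventMoment {n p : ℕ} (δ : ℝ) (k : ℕ) (Z : Fin n → Fin p → ℝ) : ℝ :=
  (wishartResolvent δ Z ^ k).trace / p

/-- The normalised trace `p⁻¹ tr Y(Z) (Y(Z) + δ)^{-(k+1)}`, written through resolvent moments. -/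
def wishartResolventMoment {n p : ℕ} (δ : ℝ) (k : ℕ) (Z : Fin n → Fin p → ℝ) : ℝ :=
  resolventMoment δ k Z - δ * resolventMoment δ (k + 1) Z

/-- The product of the resolvent moments whose orders are listed in `L`. -/
def resolventMomentProd {n p : ℕ} (δ : ℝ) (L : List ℕ) (Z : Fin n → Fin p → ℝ) : ℝ :=
  (L.map fun k => resolventMoment δ k Z).prod

section Algebra

variable {n p : ℕ}

theorem posSemidef_wishartOf (Z : Fin n → Fin p → ℝ) : (wishartOf Z).PosSemidef := by
  have h := Matrix.posSemidef_conjTranspose_mul_self (Matrix.of Z)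
  rw [Matrix.conjTranspose_eq_transpose_of_trivial] at h
  exact h.smul (by positivity)

theorem isSymm_wishartOf (Z : Fin n → Fin p → ℝ) : (wishartOf Z)ᵀ = wishartOf Z := by
  simp [wishartOf, Matrix.transpose_smul, Matrix.transpose_mul]

theorem isUnit_det_wishartOf_add {δ : ℝ} (hδ : 0 < δ) (Z : Fin n → Fin p → ℝ) :
    IsUnit (wishartOf Z + δ • (1 : Matrix (Fin p) (Fin p) ℝ)).det := by
  have h : (wishartOf Z + δ • (1 : Matrix (Fin p) (Fin p) ℝ)).PosDef :=
    (Matrix.PosDef.one.smul hδ).posSemidef_add (posSemidef_wishartOf Z)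
  exact h.det_pos.ne'.isUnit

theorem transpose_wishartResolvent (δ : ℝ) (Z : Fin n → Fin p → ℝ) :
    (wishartResolvent δ Z)ᵀ = wishartResolvent δ Z := by
  rw [wishartResolvent, Matrix.transpose_nonsing_inv]
  simp [isSymm_wishartOf]

theorem wishartOf_mul_resolvent_pow {δ : ℝ} (hδ : 0 < δ) (Z : Fin n → Fin p → ℝ) (k : ℕ) :
    wishartOf Z * wishartResolvent δ Z ^ (k + 1) =
      wishartResolvent δ Z ^ k - δ • wishartResolvent δ Z ^ (k + 1) := by
  have h := Matrix.mul_nonsing_inv _ (isUnit_det_wishartOf_add hδ Z)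
  rw [← wishartResolvent, add_mul] at h
  rw [eq_sub_iff_add_eq, pow_succ', ← mul_assoc, ← smul_mul_assoc, ← add_mul]
  simp only [smul_mul_assoc, one_mul] at h
  rw [h, one_mul]

theorem trace_wishartOf_mul_resolvent_pow (hp : p ≠ 0) {δ : ℝ} (hδ : 0 < δ)
    (Z : Fin n → Fin p → ℝ) (k : ℕ) :
    (wishartOf Z * wishartResolvent δ Z ^ (k + 1)).trace = p * wishartResolventMoment δ k Z := by
  rw [wishartOf_mul_resolvent_pow hδ, Matrix.trace_sub, Matrix.trace_smul,
    wishartResolventMoment, resolventMoment, resolventMoment]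
  have : (p : ℝ) ≠ 0 := by exact_mod_cast hp
  simp only [smul_eq_mul]
  field_simp

theorem transpose_mul_self_eq_smul_wishartOf (hn : n ≠ 0) (Z : Fin n → Fin p → ℝ) :
    (Matrix.of Z)ᵀ * Matrix.of Z = (n : ℝ) • wishartOf Z := by
  have : (n : ℝ) ≠ 0 := by exact_mod_cast hn
  rw [wishartOf, smul_smul, mul_inv_cancel₀ this, one_smul]

/-- The entries of the resolvent are bounded by `1 / δ`. -/
theorem abs_wishartResolvent_le {δ : ℝ} (hδ : 0 < δ) (Z : Fin n → Fin p → ℝ) (a b : Fin p) :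
    |wishartResolvent δ Z a b| ≤ 1 / δ := by
  set R := wishartResolvent δ Z with hR
  have hsymm : ∀ c d, R c d = R d c := fun c d =>
    congrFun (congrFun (transpose_wishartResolvent δ Z) d) c
  have h1 : R = R * wishartOf Z * R + δ • (R * R) := by
    have h := Matrix.mul_nonsing_inv _ (isUnit_det_wishartOf_add hδ Z)
    rw [← wishartResolvent, ← hR, add_mul] at h
    simp only [smul_mul_assoc, one_mul] at h
    calc R = R * (wishartOf Z * R + δ • R) := by rw [h, mul_one]
      _ = _ := by rw [mul_add, mul_assoc, mul_smul_comm]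
  have h2 : 0 ≤ (R * wishartOf Z * R) a a := by
    have h := (posSemidef_wishartOf Z).mul_mul_conjTranspose_same R
    rw [Matrix.conjTranspose_eq_transpose_of_trivial, transpose_wishartResolvent] at h
    exact h.diag_nonneg
  have h3 : R a a = (R * wishartOf Z * R) a a + δ * ∑ c, R a c ^ 2 := by
    have h7 : (R * R) a a = ∑ c, R a c ^ 2 := by
      rw [Matrix.mul_apply]
      exact Finset.sum_congr rfl fun c _ => by rw [hsymm c a, sq]
    conv_lhs => rw [h1]
    simp only [Matrix.add_apply, Matrix.smul_apply, smul_eq_mul, h7]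
  have h4 : δ * R a a ^ 2 ≤ R a a := by
    have : R a a ^ 2 ≤ ∑ c, R a c ^ 2 :=
      Finset.single_le_sum (f := fun c => R a c ^ 2) (fun c _ => sq_nonneg _) (Finset.mem_univ a)
    nlinarith
  have h5 : δ * R a b ^ 2 ≤ R a a := by
    have : R a b ^ 2 ≤ ∑ c, R a c ^ 2 :=
      Finset.single_le_sum (f := fun c => R a c ^ 2) (fun c _ => sq_nonneg _) (Finset.mem_univ b)
    nlinarith
  have h6 : δ * R a a ≤ 1 := by
    by_contra h
    push Not at h
    nlinarith
  rw [le_div_iff₀ hδ, ← abs_of_pos hδ, ← abs_mul]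
  refine abs_le_one_iff_mul_self_le_one.2 ?_
  nlinarith

/-- Simultaneous diagonalisation of all resolvents: the eigenvalues of `Y(Z)` compute every
trace of powers of resolvents. -/
theorem exists_eigenvalues_trace_resolvent_pow (Z : Fin n → Fin p → ℝ) :
    ∃ ev : Fin p → ℝ, (∀ i, 0 ≤ ev i) ∧ ∀ δ : ℝ, (∀ i, ev i + δ ≠ 0) → ∀ k : ℕ,
      (wishartResolvent δ Z ^ k).trace = ∑ i, (ev i + δ)⁻¹ ^ k := by
  have hY := posSemidef_wishartOf Z
  refine ⟨hY.1.eigenvalues, hY.eigenvalues_nonneg, fun δ hδ k => ?_⟩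
  set ev := hY.1.eigenvalues
  set φ := Unitary.conjStarAlgAut ℝ (Matrix (Fin p) (Fin p) ℝ) hY.1.eigenvectorUnitary with hφ
  have hsp : wishartOf Z = φ (Matrix.diagonal ev) := hY.1.spectral_theorem
  have h1 : wishartOf Z + δ • 1 = φ (Matrix.diagonal fun i => ev i + δ) := by
    have : (Matrix.diagonal fun i => ev i + δ) = Matrix.diagonal ev + δ • 1 := by
      rw [← Matrix.diagonal_one, ← Matrix.diagonal_smul, Matrix.diagonal_add]
      simp
    rw [this, map_add, map_smul, map_one, ← hsp]
  have h2 : wishartResolvent δ Z = φ (Matrix.diagonal fun i => (ev i + δ)⁻¹) := by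
    refine Matrix.inv_eq_right_inv ?_
    rw [h1, ← map_mul, Matrix.diagonal_mul_diagonal]
    simp [mul_inv_cancel₀ (hδ _)]
  rw [h2, ← map_pow, Matrix.diagonal_pow, hφ, Unitary.conjStarAlgAut_apply, Matrix.trace_mul_cycle,
    Unitary.coe_star_mul_self, one_mul, Matrix.trace_diagonal]
  rfl

end Algebra

section Inequalities

variable {n p : ℕ}

theorem exists_eigenvalues_resolventMoment (Z : Fin n → Fin p → ℝ) :
    ∃ ev : Fin p → ℝ, (∀ i, 0 ≤ ev i) ∧ ∀ δ : ℝ, (∀ i, ev i + δ ≠ 0) → ∀ k : ℕ,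
      resolventMoment δ k Z = (∑ i, (ev i + δ)⁻¹ ^ k) / p := by
  obtain ⟨ev, h0, h⟩ := exists_eigenvalues_trace_resolvent_pow Z
  exact ⟨ev, h0, fun δ hδ k => by rw [resolventMoment, h δ hδ k]⟩

theorem resolventMoment_nonneg {δ : ℝ} (hδ : 0 < δ) (k : ℕ) (Z : Fin n → Fin p → ℝ) :
    0 ≤ resolventMoment δ k Z := by
  obtain ⟨ev, h0, h⟩ := exists_eigenvalues_resolventMoment Z
  have hpos : ∀ i, 0 < ev i + δ := fun i => add_pos_of_nonneg_of_pos (h0 i) hδ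
  rw [h δ (fun i => (hpos i).ne')]
  exact div_nonneg (Finset.sum_nonneg fun i _ => pow_nonneg (inv_nonneg.2 (hpos i).le) k)
    p.cast_nonneg

theorem resolventMoment_zero (hp : p ≠ 0) (δ : ℝ) (Z : Fin n → Fin p → ℝ) :
    resolventMoment δ 0 Z = 1 := by
  have : (p : ℝ) ≠ 0 := by exact_mod_cast hp
  simp [resolventMoment, this]

theorem wishartResolventMoment_nonneg {δ : ℝ} (hδ : 0 < δ) (k : ℕ) (Z : Fin n → Fin p → ℝ) :
    0 ≤ wishartResolventMoment δ k Z := by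
  obtain ⟨ev, h0, h⟩ := exists_eigenvalues_resolventMoment Z
  have hpos : ∀ i, 0 < ev i + δ := fun i => add_pos_of_nonneg_of_pos (h0 i) hδ
  rw [wishartResolventMoment, h δ (fun i => (hpos i).ne'), h δ (fun i => (hpos i).ne'),
    ← mul_div_assoc, ← sub_div, Finset.mul_sum, ← Finset.sum_sub_distrib]
  refine div_nonneg (Finset.sum_nonneg fun i _ => ?_) p.cast_nonneg
  have h1 : (ev i + δ)⁻¹ ^ k - δ * (ev i + δ)⁻¹ ^ (k + 1) = ev i * (ev i + δ)⁻¹ ^ (k + 1) := by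
    have := (hpos i).ne'
    rw [pow_succ]
    field_simp
    ring
  rw [h1]
  exact mul_nonneg (h0 i) (pow_nonneg (inv_nonneg.2 (hpos i).le) _)

theorem wishartResolventMoment_le {δ : ℝ} (hδ : 0 < δ) (k : ℕ) (Z : Fin n → Fin p → ℝ) :
    wishartResolventMoment δ k Z ≤ resolventMoment δ k Z := by
  have := mul_nonneg hδ.le (resolventMoment_nonneg hδ (k + 1) Z)
  rw [wishartResolventMoment]
  linarith

/-- Chebyshev's inequality for resolvent moments. -/
theorem resolventMoment_mul_le {δ : ℝ} (hδ : 0 < δ) (a b : ℕ) (Z : Fin n → Fin p → ℝ) :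
    resolventMoment δ a Z * resolventMoment δ b Z ≤ resolventMoment δ (a + b) Z := by
  obtain ⟨ev, h0, h⟩ := exists_eigenvalues_resolventMoment Z
  have hpos : ∀ i, 0 < ev i + δ := fun i => add_pos_of_nonneg_of_pos (h0 i) hδ
  have hinv : ∀ i, 0 ≤ (ev i + δ)⁻¹ := fun i => inv_nonneg.2 (hpos i).le
  simp only [h δ (fun i => (hpos i).ne')]
  rcases Nat.eq_zero_or_pos p with rfl | hp
  · simp
  have hmono : Monovary (fun i => (ev i + δ)⁻¹ ^ a) (fun i => (ev i + δ)⁻¹ ^ b) := by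
    intro i j hij
    exact pow_le_pow_left₀ (hinv i) (lt_of_pow_lt_pow_left₀ b (hinv j) hij).le a
  have hch := hmono.sum_mul_sum_le_card_mul_sum
  simp only [Fintype.card_fin, ← pow_add] at hch
  have hp' : (0 : ℝ) < p := by exact_mod_cast hp
  rw [div_mul_div_comm, div_le_div_iff₀ (mul_pos hp' hp') hp']
  nlinarith

theorem resolventMomentProd_nonneg {δ : ℝ} (hδ : 0 < δ) (L : List ℕ) (Z : Fin n → Fin p → ℝ) :
    0 ≤ resolventMomentProd δ L Z := by
  refine List.prod_nonneg fun x hx => ?_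
  obtain ⟨k, -, rfl⟩ := List.mem_map.1 hx
  exact resolventMoment_nonneg hδ k Z

theorem resolventMomentProd_cons (δ : ℝ) (k : ℕ) (L : List ℕ) (Z : Fin n → Fin p → ℝ) :
    resolventMomentProd δ (k :: L) Z = resolventMoment δ k Z * resolventMomentProd δ L Z := by
  simp [resolventMomentProd]

theorem resolventMomentProd_nil (δ : ℝ) (Z : Fin n → Fin p → ℝ) :
    resolventMomentProd δ [] Z = 1 := by
  simp [resolventMomentProd]

theorem resolventMomentProd_le (hp : p ≠ 0) {δ : ℝ} (hδ : 0 < δ) (L : List ℕ)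
    (Z : Fin n → Fin p → ℝ) : resolventMomentProd δ L Z ≤ resolventMoment δ L.sum Z := by
  induction L with
  | nil => simp [resolventMomentProd_nil, resolventMoment_zero hp]
  | cons k L ih =>
    rw [resolventMomentProd_cons, List.sum_cons]
    exact (mul_le_mul_of_nonneg_left ih (resolventMoment_nonneg hδ k Z)).trans
      (resolventMoment_mul_le hδ k L.sum Z)

end Inequalities

/-! ### Derivatives of the resolvent -/

section Derivatives

variable {n p : ℕ}

attribute [local instance] Matrix.linftyOpNormedRing Matrix.linftyOpNormedAlgebra

/-- The derivative of `Y(Z)` with respect to the entry `(i, j)`. -/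
def wishartDeriv (Z : Fin n → Fin p → ℝ) (i : Fin n) (j : Fin p) : Matrix (Fin p) (Fin p) ℝ :=
  (n : ℝ)⁻¹ • ((Matrix.single i j (1 : ℝ))ᵀ * Matrix.of Z
    + (Matrix.of Z)ᵀ * Matrix.single i j (1 : ℝ))

/-- Replacing the entry `(i, j)` of `Z` by `x`. -/
def updateEntry (Z : Fin n → Fin p → ℝ) (i : Fin n) (j : Fin p) (x : ℝ) : Fin n → Fin p → ℝ :=
  Function.update Z i (Function.update (Z i) j x)

theorem updateEntry_self (Z : Fin n → Fin p → ℝ) (i : Fin n) (j : Fin p) :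
    updateEntry Z i j (Z i j) = Z := by
  simp [updateEntry]

theorem of_updateEntry (Z : Fin n → Fin p → ℝ) (i : Fin n) (j : Fin p) (x : ℝ) :
    Matrix.of (updateEntry Z i j x) = Matrix.of Z + (x - Z i j) • Matrix.single i j (1 : ℝ) := by
  ext a b
  by_cases ha : a = i
  · subst ha
    by_cases hb : b = j
    · subst hb; simp [updateEntry]
    · simp [updateEntry, hb, Matrix.single_apply_of_ne, Ne.symm hb]
  · simp [updateEntry, ha, Matrix.single_apply_of_ne, Ne.symm ha]

theorem hasDerivAt_wishartOf (Z : Fin n → Fin p → ℝ) (i : Fin n) (j : Fin p) :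
    HasDerivAt (fun x => wishartOf (updateEntry Z i j x)) (wishartDeriv Z i j) (Z i j) := by
  have h : (fun x => wishartOf (updateEntry Z i j x)) = fun x => wishartOf Z
      + ((x - Z i j) • wishartDeriv Z i j + (x - Z i j) ^ 2 •
        ((n : ℝ)⁻¹ • ((Matrix.single i j (1 : ℝ))ᵀ * Matrix.single i j (1 : ℝ)))) := by
    ext1 x
    simp only [wishartOf, wishartDeriv, of_updateEntry, Matrix.transpose_add,
      Matrix.transpose_smul, Matrix.add_mul, Matrix.mul_add, Matrix.smul_mul, Matrix.mul_smul]
    module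
  rw [h]
  have h1 : HasDerivAt (fun x : ℝ => x - Z i j) 1 (Z i j) := (hasDerivAt_id _).sub_const _
  refine (((h1.smul_const (wishartDeriv Z i j)).add ((h1.pow 2).smul_const _)).const_add
    (wishartOf Z)).congr_deriv ?_
  simp

theorem hasDerivAt_wishartResolvent {δ : ℝ} (hδ : 0 < δ) (Z : Fin n → Fin p → ℝ) (i : Fin n)
    (j : Fin p) :
    HasDerivAt (fun x => wishartResolvent δ (updateEntry Z i j x))
      (-(wishartResolvent δ Z * wishartDeriv Z i j * wishartResolvent δ Z)) (Z i j) := by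
  have hu : IsUnit (wishartOf Z + δ • (1 : Matrix (Fin p) (Fin p) ℝ)) :=
    (Matrix.isUnit_iff_isUnit_det _).2 (isUnit_det_wishartOf_add hδ Z)
  obtain ⟨u, hu⟩ := hu
  have h1 := (hasDerivAt_wishartOf Z i j).add_const (δ • (1 : Matrix (Fin p) (Fin p) ℝ))
  have h2 := hasFDerivAt_ringInverse (𝕜 := ℝ) u
  have h3 : (u : Matrix (Fin p) (Fin p) ℝ)
      = wishartOf (updateEntry Z i j (Z i j)) + δ • (1 : Matrix (Fin p) (Fin p) ℝ) := by
    rw [hu, updateEntry_self]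
  rw [h3] at h2
  have h4 := h2.comp_hasDerivAt (Z i j) h1
  have h5 : ((u⁻¹ : (Matrix (Fin p) (Fin p) ℝ)ˣ) : Matrix (Fin p) (Fin p) ℝ)
      = wishartResolvent δ Z := by
    rw [wishartResolvent, ← hu, Matrix.coe_units_inv]
  have h6 : (fun x => wishartResolvent δ (updateEntry Z i j x)) =
      Ring.inverse ∘ fun x => wishartOf (updateEntry Z i j x) + δ • 1 := by
    ext1 x
    simp [wishartResolvent, Matrix.nonsing_inv_eq_ringInverse]
  rw [h6]
  refine h4.congr_deriv ?_
  simp [h5]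

theorem hasDerivAt_wishartResolvent_pow {δ : ℝ} (hδ : 0 < δ) (Z : Fin n → Fin p → ℝ) (i : Fin n)
    (j : Fin p) (m : ℕ) :
    HasDerivAt (fun x => wishartResolvent δ (updateEntry Z i j x) ^ m)
      (-∑ l ∈ Finset.range m, wishartResolvent δ Z ^ (m - l) * wishartDeriv Z i j *
        wishartResolvent δ Z ^ (l + 1)) (Z i j) := by
  refine ((hasDerivAt_wishartResolvent hδ Z i j).fun_pow' m).congr_deriv ?_
  rw [← Finset.sum_neg_distrib]
  refine Finset.sum_congr rfl fun l hl => ?_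
  have hl' : m - l = m.pred - l + 1 := by
    have := Finset.mem_range.1 hl
    have : m.pred = m - 1 := rfl
    omega
  rw [updateEntry_self, hl', pow_succ _ (m.pred - l), pow_succ' _ l]
  simp only [mul_assoc, mul_neg, neg_mul]

theorem hasDerivAt_matrix_apply {f : ℝ → Matrix (Fin p) (Fin p) ℝ} {f' : Matrix (Fin p) (Fin p) ℝ}
    {x : ℝ} (hf : HasDerivAt f f' x) (a b : Fin p) :
    HasDerivAt (fun x => f x a b) (f' a b) x :=
  ((LinearMap.toContinuousLinearMap (Matrix.entryLinearMap ℝ ℝ a b)).hasFDerivAt).comp_hasDerivAt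
    x hf

theorem hasDerivAt_matrix_trace {f : ℝ → Matrix (Fin p) (Fin p) ℝ} {f' : Matrix (Fin p) (Fin p) ℝ}
    {x : ℝ} (hf : HasDerivAt f f' x) :
    HasDerivAt (fun x => (f x).trace) f'.trace x :=
  ((LinearMap.toContinuousLinearMap (Matrix.traceLinearMap (Fin p) ℝ ℝ)).hasFDerivAt).comp_hasDerivAt
    x hf

theorem trace_mul_wishartDeriv (Z : Fin n → Fin p → ℝ) (i : Fin n) (j : Fin p)
    {A : Matrix (Fin p) (Fin p) ℝ} (hA : Aᵀ = A) :
    (A * wishartDeriv Z i j).trace = 2 / n * (Matrix.of Z * A) i j := by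
  have h1 : (A * ((Matrix.of Z)ᵀ * Matrix.single i j (1 : ℝ))).trace = (Matrix.of Z * A) i j := by
    rw [← Matrix.mul_assoc, Matrix.trace_mul_single]
    simp only [MulOpposite.op_one, one_smul]
    rw [← Matrix.transpose_apply (A * (Matrix.of Z)ᵀ), Matrix.transpose_mul,
      Matrix.transpose_transpose, hA]
  have h2 : (A * ((Matrix.single i j (1 : ℝ))ᵀ * Matrix.of Z)).trace = (Matrix.of Z * A) i j := by
    rw [← h1, ← Matrix.trace_transpose, Matrix.transpose_mul, Matrix.transpose_mul,
      Matrix.transpose_transpose, hA, Matrix.trace_mul_comm]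
  rw [wishartDeriv, mul_smul_comm, mul_add, Matrix.trace_smul, Matrix.trace_add, h1, h2,
    smul_eq_mul]
  ring

theorem transpose_wishartResolvent_pow (δ : ℝ) (Z : Fin n → Fin p → ℝ) (k : ℕ) :
    (wishartResolvent δ Z ^ k)ᵀ = wishartResolvent δ Z ^ k := by
  rw [Matrix.transpose_pow, transpose_wishartResolvent]

/-- The derivative of a resolvent moment with respect to the entry `(i, j)`. -/
def resolventMomentDeriv (δ : ℝ) (i : Fin n) (j : Fin p) (k : ℕ) (Z : Fin n → Fin p → ℝ) : ℝ :=
  -(2 * k / (n * p) * (Matrix.of Z * wishartResolvent δ Z ^ (k + 1)) i j)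

theorem hasDerivAt_resolventMoment {δ : ℝ} (hδ : 0 < δ) (Z : Fin n → Fin p → ℝ) (i : Fin n)
    (j : Fin p) (k : ℕ) :
    HasDerivAt (fun x => resolventMoment δ k (updateEntry Z i j x))
      (resolventMomentDeriv δ i j k Z) (Z i j) := by
  refine ((hasDerivAt_matrix_trace
    (hasDerivAt_wishartResolvent_pow hδ Z i j k)).div_const (p : ℝ)).congr_deriv ?_
  have h : ∀ l ∈ Finset.range k, (wishartResolvent δ Z ^ (k - l) * wishartDeriv Z i j *
        wishartResolvent δ Z ^ (l + 1)).trace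
      = 2 / n * (Matrix.of Z * wishartResolvent δ Z ^ (k + 1)) i j := by
    intro l hl
    have hl' := Finset.mem_range.1 hl
    rw [Matrix.trace_mul_comm, ← mul_assoc, ← pow_add, show l + 1 + (k - l) = k + 1 by omega,
      trace_mul_wishartDeriv Z i j (transpose_wishartResolvent_pow δ Z (k + 1))]
  rw [Matrix.trace_neg, Matrix.trace_sum, Finset.sum_congr rfl h, resolventMomentDeriv]
  simp only [Finset.sum_const, Finset.card_range, nsmul_eq_mul]
  field_simp

/-- The derivative of a product of resolvent moments with respect to the entry `(i, j)`. -/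
def resolventMomentProdDeriv (δ : ℝ) (i : Fin n) (j : Fin p) :
    List ℕ → (Fin n → Fin p → ℝ) → ℝ
  | [], _ => 0
  | k :: L, Z => resolventMomentDeriv δ i j k Z * resolventMomentProd δ L Z
      + resolventMoment δ k Z * resolventMomentProdDeriv δ i j L Z

theorem hasDerivAt_resolventMomentProd {δ : ℝ} (hδ : 0 < δ) (Z : Fin n → Fin p → ℝ) (i : Fin n)
    (j : Fin p) (L : List ℕ) :
    HasDerivAt (fun x => resolventMomentProd δ L (updateEntry Z i j x))
      (resolventMomentProdDeriv δ i j L Z) (Z i j) := by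
  induction L with
  | nil =>
    simp only [resolventMomentProd_nil, resolventMomentProdDeriv]
    exact hasDerivAt_const _ _
  | cons k L ih =>
    simp only [resolventMomentProd_cons, resolventMomentProdDeriv]
    refine ((hasDerivAt_resolventMoment hδ Z i j k).fun_mul ih).congr_deriv ?_
    rw [updateEntry_self]

/-- The derivative of the entry `(i, j)` of `Z (Y(Z) + δ)^{-m}` with respect to the entry `(i, j)`
of `Z`. -/
def mulResolventPowDeriv (δ : ℝ) (i : Fin n) (j : Fin p) (m : ℕ) (Z : Fin n → Fin p → ℝ) : ℝ :=
  (wishartResolvent δ Z ^ m) j j - ∑ l ∈ Finset.range m,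
    (Matrix.of Z * (wishartResolvent δ Z ^ (m - l) * wishartDeriv Z i j *
      wishartResolvent δ Z ^ (l + 1))) i j

theorem hasDerivAt_mul_resolvent_pow {δ : ℝ} (hδ : 0 < δ) (Z : Fin n → Fin p → ℝ) (i : Fin n)
    (j : Fin p) (m : ℕ) :
    HasDerivAt (fun x => (Matrix.of (updateEntry Z i j x) *
      wishartResolvent δ (updateEntry Z i j x) ^ m) i j)
      (mulResolventPowDeriv δ i j m Z) (Z i j) := by
  have h0 := hasDerivAt_wishartResolvent_pow hδ Z i j m
  have hZ : ∀ a, HasDerivAt (fun x => updateEntry Z i j x i a) (if a = j then 1 else 0) (Z i j) := by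
    intro a
    by_cases ha : a = j
    · subst ha
      simpa [updateEntry] using! hasDerivAt_id (Z i a)
    · simpa [updateEntry, ha] using hasDerivAt_const (Z i j) (Z i a)
  simp only [Matrix.mul_apply, Matrix.of_apply]
  refine (HasDerivAt.fun_sum fun a (_ : a ∈ Finset.univ) =>
    (hZ a).fun_mul (hasDerivAt_matrix_apply h0 a j)).congr_deriv ?_
  rw [updateEntry_self, Finset.sum_add_distrib]
  simp only [ite_mul, one_mul, zero_mul, Finset.sum_ite_eq', Finset.mem_univ, if_true,
    mulResolventPowDeriv, sub_eq_add_neg]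
  congr 1
  calc _ = (Matrix.of Z * -∑ l ∈ Finset.range m, wishartResolvent δ Z ^ (m - l) *
        wishartDeriv Z i j * wishartResolvent δ Z ^ (l + 1)) i j := by rw [Matrix.mul_apply]; rfl
    _ = _ := by rw [Matrix.mul_neg, Matrix.mul_sum, Matrix.neg_apply, Matrix.sum_apply]

end Derivatives

/-! ### Loop equations -/

section Sums

variable {n p : ℕ}

theorem sum_entries_mul_entries (Z : Fin n → Fin p → ℝ) (A B : Matrix (Fin p) (Fin p) ℝ) :
    ∑ i, ∑ j, (Matrix.of Z * A) i j * (Matrix.of Z * B) i j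
      = (Aᵀ * ((Matrix.of Z)ᵀ * Matrix.of Z) * B).trace := by
  have h : Aᵀ * ((Matrix.of Z)ᵀ * Matrix.of Z) * B = (Matrix.of Z * A)ᵀ * (Matrix.of Z * B) := by
    rw [Matrix.transpose_mul]
    simp only [Matrix.mul_assoc]
  rw [h, Matrix.trace, Finset.sum_comm]
  simp only [Matrix.diag_apply]
  exact Finset.sum_congr rfl fun j _ => by rw [Matrix.mul_apply]; rfl

theorem sum_mul_resolvent_pow (hn : n ≠ 0) (hp : p ≠ 0) {δ : ℝ} (hδ : 0 < δ)
    (Z : Fin n → Fin p → ℝ) {a b k : ℕ} (h : a + b = k + 1) :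
    ∑ i, ∑ j, (Matrix.of Z * wishartResolvent δ Z ^ a) i j *
        (Matrix.of Z * wishartResolvent δ Z ^ b) i j
      = n * (p * wishartResolventMoment δ k Z) := by
  rw [sum_entries_mul_entries, transpose_wishartResolvent_pow,
    transpose_mul_self_eq_smul_wishartOf hn, Matrix.trace_mul_comm, ← Matrix.mul_assoc, ← pow_add,
    add_comm b a, h, Matrix.trace_mul_comm, Matrix.smul_mul, Matrix.trace_smul,
    trace_wishartOf_mul_resolvent_pow hp hδ, smul_eq_mul]

theorem mul_single_mul_apply {m₁ m₂ m₃ m₄ : ℕ} (M : Matrix (Fin m₁) (Fin m₂) ℝ)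
    (N : Matrix (Fin m₃) (Fin m₄) ℝ) (a : Fin m₂) (b : Fin m₃) (i : Fin m₁) (j : Fin m₄) :
    (M * Matrix.single a b (1 : ℝ) * N) i j = M i a * N b j := by
  rw [Matrix.mul_apply, Finset.sum_eq_single b]
  · simp
  · intro c _ hc
    rw [Matrix.mul_single_apply_of_ne (hbj := hc), zero_mul]
  · simp

theorem sum_mul_wishartDeriv (hn : n ≠ 0) (hp : p ≠ 0) {δ : ℝ} (hδ : 0 < δ)
    (Z : Fin n → Fin p → ℝ) (a b : ℕ) :
    ∑ i, ∑ j, (Matrix.of Z * (wishartResolvent δ Z ^ (a + 1) * wishartDeriv Z i j *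
      wishartResolvent δ Z ^ b)) i j
      = p * wishartResolventMoment δ (a + b) Z
        + p * wishartResolventMoment δ a Z * (p * resolventMoment δ b Z) := by
  set R := wishartResolvent δ Z with hR
  have hn' : (n : ℝ) ≠ 0 := by exact_mod_cast hn
  have hp' : (p : ℝ) ≠ 0 := by exact_mod_cast hp
  have h1 : ∀ i j, (Matrix.of Z * (R ^ (a + 1) * wishartDeriv Z i j * R ^ b)) i j
      = (n : ℝ)⁻¹ * ((Matrix.of Z * R ^ (a + 1)) i j * (Matrix.of Z * R ^ b) i j
        + (Matrix.of Z * R ^ (a + 1) * (Matrix.of Z)ᵀ) i i * (R ^ b) j j) := by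
    intro i j
    have : Matrix.of Z * (R ^ (a + 1) * wishartDeriv Z i j * R ^ b) = (n : ℝ)⁻¹ •
        ((Matrix.of Z * R ^ (a + 1)) * Matrix.single j i (1 : ℝ) * (Matrix.of Z * R ^ b)
        + (Matrix.of Z * R ^ (a + 1) * (Matrix.of Z)ᵀ) * Matrix.single i j (1 : ℝ) * R ^ b) := by
      rw [wishartDeriv, Matrix.transpose_single]
      simp only [Matrix.mul_smul, Matrix.smul_mul, Matrix.mul_add, Matrix.add_mul,
        Matrix.mul_assoc]
    rw [this, Matrix.smul_apply, Matrix.add_apply, mul_single_mul_apply, mul_single_mul_apply,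
      smul_eq_mul]
  simp only [h1, ← Finset.mul_sum, Finset.sum_add_distrib, ← Finset.sum_mul]
  rw [sum_mul_resolvent_pow hn hp hδ Z (show a + 1 + b = a + b + 1 by omega)]
  have h2 : ∑ i, (Matrix.of Z * R ^ (a + 1) * (Matrix.of Z)ᵀ) i i
      = n * (p * wishartResolventMoment δ a Z) := by
    change (Matrix.of Z * R ^ (a + 1) * (Matrix.of Z)ᵀ).trace = _
    rw [Matrix.trace_mul_comm, ← Matrix.mul_assoc, transpose_mul_self_eq_smul_wishartOf hn,
      Matrix.smul_mul, Matrix.trace_smul, trace_wishartOf_mul_resolvent_pow hp hδ, smul_eq_mul]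
  have h3 : ∑ j, (R ^ b) j j = p * resolventMoment δ b Z := by
    rw [resolventMoment, mul_div_cancel₀ _ hp']
    rfl
  rw [h2, h3]
  field_simp

theorem sum_mulResolventPowDeriv (hn : n ≠ 0) (hp : p ≠ 0) {δ : ℝ} (hδ : 0 < δ)
    (Z : Fin n → Fin p → ℝ) (M : ℕ) :
    ∑ i, ∑ j, mulResolventPowDeriv δ i j (M + 1) Z
      = n * (p * resolventMoment δ (M + 1) Z)
        - ∑ l ∈ Finset.range (M + 1), (p * wishartResolventMoment δ (M + 1) Z
          + p * wishartResolventMoment δ (M - l) Z * (p * resolventMoment δ (l + 1) Z)) := by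
  have hp' : (p : ℝ) ≠ 0 := by exact_mod_cast hp
  simp only [mulResolventPowDeriv, Finset.sum_sub_distrib]
  congr 1
  · rw [Finset.sum_const, resolventMoment, mul_div_cancel₀ _ hp', Finset.card_univ,
      Fintype.card_fin, nsmul_eq_mul]
    rfl
  · rw [Finset.sum_congr rfl fun i _ => Finset.sum_comm, Finset.sum_comm]
    refine Finset.sum_congr rfl fun l hl => ?_
    have hl' := Finset.mem_range.1 hl
    rw [show M + 1 - l = M - l + 1 by omega, sum_mul_wishartDeriv hn hp hδ,
      show M - l + (l + 1) = M + 1 by omega]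

/-- The contraction of the gradient of a product of resolvent moments with `Z (Y(Z) + δ)^{-m}`,
up to sign. -/
def loopCorrection (δ : ℝ) (m : ℕ) : List ℕ → (Fin n → Fin p → ℝ) → ℝ
  | [], _ => 0
  | k :: L, Z => 2 * k * wishartResolventMoment δ (m + k) Z * resolventMomentProd δ L Z
      + resolventMoment δ k Z * loopCorrection δ m L Z

theorem sum_mul_resolventMomentProdDeriv (hn : n ≠ 0) (hp : p ≠ 0) {δ : ℝ} (hδ : 0 < δ)
    (Z : Fin n → Fin p → ℝ) (m : ℕ) (L : List ℕ) :
    ∑ i, ∑ j, (Matrix.of Z * wishartResolvent δ Z ^ m) i j * resolventMomentProdDeriv δ i j L Z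
      = -loopCorrection δ m L Z := by
  have hn' : (n : ℝ) ≠ 0 := by exact_mod_cast hn
  have hp' : (p : ℝ) ≠ 0 := by exact_mod_cast hp
  induction L with
  | nil => simp [resolventMomentProdDeriv, loopCorrection]
  | cons k L ih =>
    have h : ∀ i j, (Matrix.of Z * wishartResolvent δ Z ^ m) i j *
          resolventMomentProdDeriv δ i j (k :: L) Z
        = -(2 * k / (n * p) * resolventMomentProd δ L Z) *
            ((Matrix.of Z * wishartResolvent δ Z ^ m) i j *
              (Matrix.of Z * wishartResolvent δ Z ^ (k + 1)) i j)
          + resolventMoment δ k Z * ((Matrix.of Z * wishartResolvent δ Z ^ m) i j *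
              resolventMomentProdDeriv δ i j L Z) := by
      intro i j
      rw [resolventMomentProdDeriv, resolventMomentDeriv]
      ring
    simp only [h, Finset.sum_add_distrib, ← Finset.mul_sum, ih]
    rw [sum_mul_resolvent_pow hn hp hδ Z (show m + (k + 1) = m + k + 1 by omega), loopCorrection]
    field_simp
    ring

theorem loopCorrection_nonneg {δ : ℝ} (hδ : 0 < δ) (Z : Fin n → Fin p → ℝ) (m : ℕ)
    (L : List ℕ) : 0 ≤ loopCorrection δ m L Z := by
  induction L with
  | nil => simp [loopCorrection]
  | cons k L ih =>
    have h1 := wishartResolventMoment_nonneg hδ (m + k) Z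
    have h2 := resolventMomentProd_nonneg hδ L Z
    have h3 := resolventMoment_nonneg hδ k Z
    rw [loopCorrection]
    positivity

theorem loopCorrection_le (hp : p ≠ 0) {δ : ℝ} (hδ : 0 < δ) (Z : Fin n → Fin p → ℝ) (m : ℕ)
    (L : List ℕ) :
    loopCorrection δ m L Z ≤ 2 * L.sum * resolventMoment δ (m + L.sum) Z := by
  induction L with
  | nil => simp [loopCorrection]
  | cons k L ih =>
    have h1 : wishartResolventMoment δ (m + k) Z * resolventMomentProd δ L Z
        ≤ resolventMoment δ (m + (k + L.sum)) Z := by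
      rw [← add_assoc]
      exact (mul_le_mul (wishartResolventMoment_le hδ _ Z) (resolventMomentProd_le hp hδ L Z)
        (resolventMomentProd_nonneg hδ L Z) (resolventMoment_nonneg hδ _ Z)).trans
        (resolventMoment_mul_le hδ _ _ Z)
    have h2 : resolventMoment δ k Z * loopCorrection δ m L Z
        ≤ 2 * L.sum * resolventMoment δ (m + (k + L.sum)) Z := by
      refine (mul_le_mul_of_nonneg_left ih (resolventMoment_nonneg hδ k Z)).trans ?_
      have := resolventMoment_mul_le hδ k (m + L.sum) Z
      rw [show k + (m + L.sum) = m + (k + L.sum) by omega] at this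
      have h3 : (0 : ℝ) ≤ 2 * L.sum := by positivity
      nlinarith [mul_le_mul_of_nonneg_left this h3]
    rw [loopCorrection, List.sum_cons, Nat.cast_add]
    have h4 : (0 : ℝ) ≤ 2 * k := by positivity
    nlinarith [mul_le_mul_of_nonneg_left h1 h4]

end Sums

/-! ### Integrability -/

section Moments

variable {n p : ℕ}

instance (n p : ℕ) : IsProbabilityMeasure (gaussEnsemble n p) := by
  unfold gaussEnsemble; infer_instance

/-- All absolute moments of `f` under the Gaussian ensemble are finite. -/
def HasAllMoments (f : (Fin n → Fin p → ℝ) → ℝ) : Prop :=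
  ∀ q : ℕ, MemLp f q (gaussEnsemble n p)

namespace HasAllMoments

variable {f g : (Fin n → Fin p → ℝ) → ℝ}

theorem integrable (hf : HasAllMoments f) : Integrable f (gaussEnsemble n p) := by
  have := hf 1
  rwa [Nat.cast_one, memLp_one_iff_integrable] at this

theorem add (hf : HasAllMoments f) (hg : HasAllMoments g) : HasAllMoments fun Z => f Z + g Z :=
  fun q => (hf q).add (hg q)

theorem sub (hf : HasAllMoments f) (hg : HasAllMoments g) : HasAllMoments fun Z => f Z - g Z :=
  fun q => (hf q).sub (hg q)

theorem neg (hf : HasAllMoments f) : HasAllMoments fun Z => -f Z :=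
  fun q => (hf q).neg

theorem sum {ι : Type*} (s : Finset ι) {f : ι → (Fin n → Fin p → ℝ) → ℝ}
    (hf : ∀ i ∈ s, HasAllMoments (f i)) : HasAllMoments fun Z => ∑ i ∈ s, f i Z :=
  fun q => memLp_finsetSum s fun i hi => hf i hi q

theorem mul (hf : HasAllMoments f) (hg : HasAllMoments g) : HasAllMoments fun Z => f Z * g Z := by
  intro q
  rcases Nat.eq_zero_or_pos q with rfl | hq
  · rw [Nat.cast_zero, memLp_zero_iff_aestronglyMeasurable]
    exact (hf 1).1.mul (hg 1).1
  have : ENNReal.HolderTriple ((2 * q : ℕ) : ENNReal) ((2 * q : ℕ) : ENNReal) (q : ENNReal) := by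
    constructor
    have hq' : (q : ENNReal) ≠ 0 := by exact_mod_cast hq.ne'
    rw [Nat.cast_mul, Nat.cast_two, ENNReal.mul_inv (by simp) (by simp), ← add_mul,
      ENNReal.inv_two_add_inv_two, one_mul]
  exact (hg (2 * q)).mul (hf (2 * q))

theorem of_continuous_of_abs_le (hf : Continuous f) (C : ℝ) (h : ∀ Z, |f Z| ≤ C) :
    HasAllMoments f :=
  fun _ => MemLp.of_bound hf.aestronglyMeasurable C (Eventually.of_forall h)

theorem const (c : ℝ) : HasAllMoments (fun _ : Fin n → Fin p → ℝ => c) :=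
  of_continuous_of_abs_le continuous_const |c| fun _ => le_rfl

theorem const_mul (c : ℝ) (hf : HasAllMoments f) : HasAllMoments fun Z => c * f Z :=
  (const c).mul hf

theorem entry (i : Fin n) (j : Fin p) : HasAllMoments fun Z : Fin n → Fin p → ℝ => Z i j := by
  intro q
  have h1 := (ProbabilityTheory.memLp_id_gaussianReal (μ := 0) (v := 1) q)
  have h2 : MeasurePreserving (fun Z : Fin n → Fin p → ℝ => Z i j) (gaussEnsemble n p)
      (ProbabilityTheory.gaussianReal 0 1) :=
    (measurePreserving_eval (fun _ : Fin p => ProbabilityTheory.gaussianReal 0 1) j).comp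
      (measurePreserving_eval (fun _ : Fin n => Measure.pi fun _ : Fin p =>
        ProbabilityTheory.gaussianReal 0 1) i)
  exact h1.comp_measurePreserving h2

theorem matrix_mul {m₁ m₂ m₃ : ℕ} {A : (Fin n → Fin p → ℝ) → Matrix (Fin m₁) (Fin m₂) ℝ}
    {B : (Fin n → Fin p → ℝ) → Matrix (Fin m₂) (Fin m₃) ℝ}
    (hA : ∀ a b, HasAllMoments fun Z => A Z a b) (hB : ∀ a b, HasAllMoments fun Z => B Z a b)
    (a : Fin m₁) (b : Fin m₃) : HasAllMoments fun Z => (A Z * B Z) a b := by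
  simp only [Matrix.mul_apply]
  exact sum _ fun c _ => (hA a c).mul (hB c b)

end HasAllMoments

theorem continuous_wishartOf : Continuous (wishartOf : (Fin n → Fin p → ℝ) → _) := by
  unfold wishartOf
  have h : Continuous (fun Z : Fin n → Fin p → ℝ => Matrix.of Z) := continuous_id
  exact (h.matrix_transpose.matrix_mul h).const_smul (n : ℝ)⁻¹

theorem continuous_wishartResolvent {δ : ℝ} (hδ : 0 < δ) :
    Continuous (wishartResolvent δ : (Fin n → Fin p → ℝ) → _) := by
  have h : Continuous (fun Z : Fin n → Fin p → ℝ => wishartOf Z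
      + δ • (1 : Matrix (Fin p) (Fin p) ℝ)) := continuous_wishartOf.add continuous_const
  unfold wishartResolvent
  simp only [Matrix.inv_def, Ring.inverse_eq_inv']
  exact (h.matrix_det.inv₀ fun Z => (isUnit_det_wishartOf_add hδ Z).ne_zero).smul h.matrix_adjugate

theorem hasAllMoments_resolvent_pow {δ : ℝ} (hδ : 0 < δ) (k : ℕ) (a b : Fin p) :
    HasAllMoments fun Z : Fin n → Fin p → ℝ => (wishartResolvent δ Z ^ k) a b := by
  induction k generalizing a b with
  | zero => simp only [pow_zero]; exact .const _
  | succ k ih =>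
    simp only [pow_succ]
    exact .matrix_mul ih (fun c d => .of_continuous_of_abs_le
      ((continuous_wishartResolvent hδ).matrix_elem c d) (1 / δ)
      fun Z => abs_wishartResolvent_le hδ Z c d) a b

theorem hasAllMoments_mul_resolvent_pow {δ : ℝ} (hδ : 0 < δ) (k : ℕ) (i : Fin n) (j : Fin p) :
    HasAllMoments fun Z : Fin n → Fin p → ℝ => (Matrix.of Z * wishartResolvent δ Z ^ k) i j :=
  .matrix_mul (fun a b => .entry a b) (hasAllMoments_resolvent_pow hδ k) i j

theorem hasAllMoments_resolventMoment {δ : ℝ} (hδ : 0 < δ) (k : ℕ) :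
    HasAllMoments fun Z : Fin n → Fin p → ℝ => resolventMoment δ k Z := by
  simp only [resolventMoment, div_eq_inv_mul, Matrix.trace, Matrix.diag_apply]
  exact .const_mul _ (.sum _ fun a _ => hasAllMoments_resolvent_pow hδ k a a)

theorem hasAllMoments_wishartResolventMoment {δ : ℝ} (hδ : 0 < δ) (k : ℕ) :
    HasAllMoments fun Z : Fin n → Fin p → ℝ => wishartResolventMoment δ k Z :=
  (hasAllMoments_resolventMoment hδ k).sub (.const_mul _ (hasAllMoments_resolventMoment hδ (k + 1)))

theorem hasAllMoments_resolventMomentProd {δ : ℝ} (hδ : 0 < δ) (L : List ℕ) :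
    HasAllMoments fun Z : Fin n → Fin p → ℝ => resolventMomentProd δ L Z := by
  induction L with
  | nil => simp only [resolventMomentProd_nil]; exact .const 1
  | cons k L ih =>
    simp only [resolventMomentProd_cons]
    exact (hasAllMoments_resolventMoment hδ k).mul ih

theorem hasAllMoments_resolventMomentProdDeriv {δ : ℝ} (hδ : 0 < δ) (i : Fin n) (j : Fin p)
    (L : List ℕ) : HasAllMoments fun Z : Fin n → Fin p → ℝ =>
      resolventMomentProdDeriv δ i j L Z := by
  induction L with
  | nil => simp only [resolventMomentProdDeriv]; exact .const 0
  | cons k L ih =>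
    simp only [resolventMomentProdDeriv, resolventMomentDeriv]
    exact ((HasAllMoments.const_mul _ (hasAllMoments_mul_resolvent_pow hδ (k + 1) i j)).neg.mul
      (hasAllMoments_resolventMomentProd hδ L)).add ((hasAllMoments_resolventMoment hδ k).mul ih)

theorem hasAllMoments_loopCorrection {δ : ℝ} (hδ : 0 < δ) (m : ℕ) (L : List ℕ) :
    HasAllMoments fun Z : Fin n → Fin p → ℝ => loopCorrection δ m L Z := by
  induction L with
  | nil => simp only [loopCorrection]; exact .const 0
  | cons k L ih =>
    simp only [loopCorrection]
    exact ((HasAllMoments.const_mul _ (hasAllMoments_wishartResolventMoment hδ (m + k))).mul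
      (hasAllMoments_resolventMomentProd hδ L)).add ((hasAllMoments_resolventMoment hδ k).mul ih)

theorem hasAllMoments_mulResolventPowDeriv {δ : ℝ} (hδ : 0 < δ) (i : Fin n) (j : Fin p) (m : ℕ) :
    HasAllMoments fun Z : Fin n → Fin p → ℝ => mulResolventPowDeriv δ i j m Z := by
  refine (hasAllMoments_resolvent_pow hδ m j j).sub (.sum _ fun l _ => ?_)
  have hZ : ∀ a b, HasAllMoments fun Z : Fin n → Fin p → ℝ => Matrix.of Z a b :=
    fun a b => .entry a b
  have hZt : ∀ a b, HasAllMoments fun Z : Fin n → Fin p → ℝ => (Matrix.of Z)ᵀ a b :=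
    fun a b => .entry b a
  have hD : ∀ a b, HasAllMoments fun Z : Fin n → Fin p → ℝ => wishartDeriv Z i j a b := by
    intro a b
    simp only [wishartDeriv, Matrix.smul_apply, Matrix.add_apply, smul_eq_mul]
    have h1 : HasAllMoments fun Z : Fin n → Fin p → ℝ =>
        ((Matrix.single i j (1 : ℝ))ᵀ * Matrix.of Z) a b :=
      .matrix_mul (A := fun _ => (Matrix.single i j (1 : ℝ))ᵀ) (fun _ _ => .const _) hZ a b
    have h2 : HasAllMoments fun Z : Fin n → Fin p → ℝ =>
        ((Matrix.of Z)ᵀ * Matrix.single i j (1 : ℝ)) a b :=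
      .matrix_mul (B := fun _ => Matrix.single i j (1 : ℝ)) hZt (fun _ _ => .const _) a b
    exact .const_mul _ (h1.add h2)
  have h3 := fun a b => HasAllMoments.matrix_mul (hasAllMoments_resolvent_pow hδ (m - l)) hD a b
  have h4 := fun a b => HasAllMoments.matrix_mul h3 (hasAllMoments_resolvent_pow hδ (l + 1)) a b
  exact .matrix_mul hZ h4 i j

/-- The loop equations for resolvent moments of the Wishart ensemble. -/
theorem loop_equation (hn : n ≠ 0) (hp : p ≠ 0) {δ : ℝ} (hδ : 0 < δ) (M : ℕ) (L : List ℕ) :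
    ∫ Z, wishartResolventMoment δ M Z * resolventMomentProd δ L Z ∂gaussEnsemble n p
      = ∫ Z, (resolventMoment δ (M + 1) Z
          - (M + 1) / n * wishartResolventMoment δ (M + 1) Z
          - p / n * ∑ l ∈ Finset.range (M + 1),
            wishartResolventMoment δ (M - l) Z * resolventMoment δ (l + 1) Z)
          * resolventMomentProd δ L Z
          - 1 / (n * p) * loopCorrection δ (M + 1) L Z ∂gaussEnsemble n p := by
  have hn' : (n : ℝ) ≠ 0 := by exact_mod_cast hn
  have hp' : (p : ℝ) ≠ 0 := by exact_mod_cast hp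
  have hF := hasAllMoments_resolventMomentProd (n := n) (p := p) hδ L
  have hf := fun i j => (hasAllMoments_mul_resolvent_pow (n := n) (p := p) hδ (M + 1) i j).mul hF
  have hf' := fun i j => ((hasAllMoments_mulResolventPowDeriv (n := n) (p := p) hδ i j (M + 1)).mul
    hF).add ((hasAllMoments_mul_resolvent_pow hδ (M + 1) i j).mul
      (hasAllMoments_resolventMomentProdDeriv hδ i j L))
  have ibp : ∀ i j, _ := fun i j => integral_entry_mul_gaussEnsemble (n := n) (p := p) i j
    (f := fun Z => (Matrix.of Z * wishartResolvent δ Z ^ (M + 1)) i j * resolventMomentProd δ L Z)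
    (f' := fun Z => mulResolventPowDeriv δ i j (M + 1) Z * resolventMomentProd δ L Z
      + (Matrix.of Z * wishartResolvent δ Z ^ (M + 1)) i j * resolventMomentProdDeriv δ i j L Z)
    (fun Z => by
      refine ((hasDerivAt_mul_resolvent_pow hδ Z i j (M + 1)).fun_mul
        (hasDerivAt_resolventMomentProd hδ Z i j L)).congr_deriv ?_
      simp only [updateEntry_self])
    (hf i j).integrable (hf' i j).integrable ((HasAllMoments.entry i j).mul (hf i j)).integrable
  have hsum := Finset.sum_congr rfl fun i (_ : i ∈ (Finset.univ : Finset (Fin n))) =>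
    Finset.sum_congr rfl fun j (_ : j ∈ (Finset.univ : Finset (Fin p))) => ibp i j
  have hI := fun i j => ((HasAllMoments.entry i j).mul (hf i j)).integrable
  have hI' := fun i j => (hf' i j).integrable
  simp only [← integral_finsetSum _ fun j _ => hI _ j,
    ← integral_finsetSum _ fun j _ => hI' _ j] at hsum
  rw [← integral_finsetSum _ fun i _ => integrable_finsetSum _ fun j _ => hI i j,
    ← integral_finsetSum _ fun i _ => integrable_finsetSum _ fun j _ => hI' i j] at hsum
  have e1 : ∀ Z : Fin n → Fin p → ℝ, ∑ i, ∑ j, Z i j *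
      ((Matrix.of Z * wishartResolvent δ Z ^ (M + 1)) i j * resolventMomentProd δ L Z)
      = n * p * (wishartResolventMoment δ M Z * resolventMomentProd δ L Z) := by
    intro Z
    have h := sum_mul_resolvent_pow hn hp hδ Z (show 0 + (M + 1) = M + 1 by omega)
    rw [pow_zero, Matrix.mul_one] at h
    simp only [← mul_assoc, ← Finset.sum_mul]
    rw [mul_assoc (n : ℝ), ← h]
    rfl
  have e2 : ∀ Z : Fin n → Fin p → ℝ, ∑ i, ∑ j,
      (mulResolventPowDeriv δ i j (M + 1) Z * resolventMomentProd δ L Z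
      + (Matrix.of Z * wishartResolvent δ Z ^ (M + 1)) i j * resolventMomentProdDeriv δ i j L Z)
      = n * p * ((resolventMoment δ (M + 1) Z
          - (M + 1) / n * wishartResolventMoment δ (M + 1) Z
          - p / n * ∑ l ∈ Finset.range (M + 1),
            wishartResolventMoment δ (M - l) Z * resolventMoment δ (l + 1) Z)
          * resolventMomentProd δ L Z
          - 1 / (n * p) * loopCorrection δ (M + 1) L Z) := by
    intro Z
    simp only [Finset.sum_add_distrib, ← Finset.sum_mul]
    rw [sum_mulResolventPowDeriv hn hp hδ, sum_mul_resolventMomentProdDeriv hn hp hδ,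
      Finset.sum_add_distrib, Finset.sum_const, Finset.card_range]
    have h : ∑ l ∈ Finset.range (M + 1),
        p * wishartResolventMoment δ (M - l) Z * (p * resolventMoment δ (l + 1) Z)
        = p ^ 2 * ∑ l ∈ Finset.range (M + 1),
          wishartResolventMoment δ (M - l) Z * resolventMoment δ (l + 1) Z := by
      rw [Finset.mul_sum]
      exact Finset.sum_congr rfl fun l _ => by ring
    rw [h, nsmul_eq_mul]
    push_cast
    field_simp
    ring
  simp only [e1, e2] at hsum
  rw [integral_const_mul, integral_const_mul] at hsum
  exact mul_left_cancel₀ (mul_ne_zero hn' hp') hsum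

end Moments

/-! ### Negative moments of the Marchenko–Pastur law -/

section MarchenkoPastur

/-- The negative moment `∫ t^{-m} dMP(t)` of the Marchenko–Pastur law with parameter `α`. -/
def mpNegMoment (α : ℝ) (m : ℕ) : ℝ :=
  ∫ t in ((1 - Real.sqrt α) ^ 2)..((1 + Real.sqrt α) ^ 2),
    Real.sqrt (((1 + Real.sqrt α) ^ 2 - t) * (t - (1 - Real.sqrt α) ^ 2)) /
      (2 * Real.pi * α * t ^ (m + 1))

theorem poisson_denominator_pos {q : ℝ} (hq0 : 0 ≤ q) (hq1 : q < 1) (θ : ℝ) :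
    0 < 1 + q ^ 2 - 2 * q * Real.cos θ := by
  nlinarith [Real.cos_le_one θ, sq_nonneg (1 - q), mul_nonneg hq0 (sub_nonneg.2 (Real.cos_le_one θ)),
    mul_pos (sub_pos.2 hq1) (sub_pos.2 hq1)]

theorem integral_sin_sq_div_poisson {q : ℝ} (hq0 : 0 < q) (hq1 : q < 1) :
    ∫ θ in (0 : ℝ)..Real.pi, Real.sin θ ^ 2 / (1 + q ^ 2 - 2 * q * Real.cos θ) = Real.pi / 2 := by
  have hT := poisson_denominator_pos hq0.le hq1
  have hD : ∀ θ, 0 < 1 - q * Real.cos θ := fun θ => by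
    nlinarith [Real.cos_le_one θ, mul_nonneg hq0.le (sub_nonneg.2 (Real.cos_le_one θ))]
  have hderiv : ∀ θ : ℝ, HasDerivAt (fun θ : ℝ =>
      -(1 - q ^ 2) / (4 * q ^ 2) *
          (θ + 2 * Real.arctan (q * Real.sin θ / (1 - q * Real.cos θ)))
        + (1 + q ^ 2) / (2 * q ^ 2) * θ
        - ((1 + q ^ 2) * θ - 2 * q * Real.sin θ) / (4 * q ^ 2))
      (Real.sin θ ^ 2 / (1 + q ^ 2 - 2 * q * Real.cos θ)) θ := by
    intro θ
    have hN := (Real.hasDerivAt_sin θ).const_mul q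
    have hDen := ((Real.hasDerivAt_cos θ).const_mul q).const_sub 1
    have hA := (hN.div hDen (hD θ).ne').arctan
    have hid := hasDerivAt_id θ
    have h := ((((hid.add (hA.const_mul 2)).const_mul (-(1 - q ^ 2) / (4 * q ^ 2))).add
      (hid.const_mul ((1 + q ^ 2) / (2 * q ^ 2)))).sub
      (((hid.const_mul (1 + q ^ 2)).sub ((Real.hasDerivAt_sin θ).const_mul (2 * q))).div_const
        (4 * q ^ 2)))
    refine h.congr_deriv ?_
    have h1 := (hD θ).ne'
    have h2 := (hT θ).ne'
    have hs : Real.sin θ ^ 2 = 1 - Real.cos θ ^ 2 := Real.sin_sq θ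
    have hA' : 1 / (1 + (q * Real.sin θ / (1 - q * Real.cos θ)) ^ 2) *
        ((q * Real.cos θ * (1 - q * Real.cos θ) - q * Real.sin θ * -(q * -Real.sin θ)) /
          (1 - q * Real.cos θ) ^ 2) =
        (q * Real.cos θ - q ^ 2) / (1 + q ^ 2 - 2 * q * Real.cos θ) := by
      have h3 : 1 + (q * Real.sin θ / (1 - q * Real.cos θ)) ^ 2 =
          (1 + q ^ 2 - 2 * q * Real.cos θ) / (1 - q * Real.cos θ) ^ 2 := by
        rw [div_pow, mul_pow, hs]
        field_simp
        ring
      have h4 : q * Real.cos θ * (1 - q * Real.cos θ) - q * Real.sin θ * -(q * -Real.sin θ) =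
          q * Real.cos θ - q ^ 2 := by
        linear_combination (-q ^ 2) * hs
      rw [h3, h4]
      field_simp
    simp only [Pi.div_apply]
    rw [hA', hs]
    obtain ⟨T, hTdef⟩ : ∃ T, T = 1 + q ^ 2 - 2 * q * Real.cos θ := ⟨_, rfl⟩
    rw [← hTdef] at h2 ⊢
    have hc : Real.cos θ = (1 + q ^ 2 - T) / (2 * q) := by
      rw [hTdef]
      field_simp
      ring
    rw [hc]
    field_simp
    ring
  rw [intervalIntegral.integral_eq_sub_of_hasDerivAt (fun θ _ => hderiv θ)]
  · simp
    field_simp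
    ring
  · refine Continuous.intervalIntegrable ?_ _ _
    exact Continuous.div (by fun_prop) (by fun_prop) fun θ => (hT θ).ne'

theorem mp_support_pos {α : ℝ} (hα0 : 0 < α) (hα1 : α < 1) (θ : ℝ) :
    (1 - Real.sqrt α) ^ 2 ≤ 1 + α - 2 * Real.sqrt α * Real.cos θ ∧
      0 < (1 - Real.sqrt α) ^ 2 := by
  have h1 : Real.sqrt α < 1 := by rw [Real.sqrt_lt' one_pos]; simpa using hα1
  have h2 := Real.sq_sqrt hα0.le
  refine ⟨?_, pow_pos (sub_pos.2 h1) 2⟩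
  nlinarith [mul_nonneg (Real.sqrt_nonneg α) (sub_nonneg.2 (Real.cos_le_one θ))]

theorem mpNegMoment_eq_integral_sin {α : ℝ} (hα0 : 0 < α) (hα1 : α < 1) (m : ℕ) :
    mpNegMoment α m = 2 / Real.pi * ∫ θ in (0 : ℝ)..Real.pi,
      Real.sin θ ^ 2 / (1 + α - 2 * Real.sqrt α * Real.cos θ) ^ (m + 1) := by
  have h2 := Real.sq_sqrt hα0.le
  have hpos := Real.sqrt_pos.2 hα0
  have hsup := mp_support_pos hα0 hα1
  have hsub := intervalIntegral.integral_comp_mul_deriv' (a := 0) (b := Real.pi)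
    (f := fun θ => 1 + α - 2 * Real.sqrt α * Real.cos θ)
    (f' := fun θ => 2 * Real.sqrt α * Real.sin θ)
    (g := fun t => Real.sqrt (((1 + Real.sqrt α) ^ 2 - t) * (t - (1 - Real.sqrt α) ^ 2)) /
      (2 * Real.pi * α * t ^ (m + 1)))
    (fun θ _ => (((Real.hasDerivAt_cos θ).const_mul (2 * Real.sqrt α)).const_sub
      (1 + α)).congr_deriv (by ring)) (by fun_prop) (by
      refine ContinuousOn.div (by fun_prop) (by fun_prop) ?_
      rintro _ ⟨θ, -, rfl⟩
      have := (hsup θ).2.trans_le (hsup θ).1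
      have := Real.pi_pos
      positivity)
  have e0 : 1 + α - 2 * Real.sqrt α * Real.cos 0 = (1 - Real.sqrt α) ^ 2 := by
    rw [Real.cos_zero]; linear_combination -h2
  have e1 : 1 + α - 2 * Real.sqrt α * Real.cos Real.pi = (1 + Real.sqrt α) ^ 2 := by
    rw [Real.cos_pi]; linear_combination -h2
  simp only [e0, e1] at hsub
  rw [mpNegMoment, ← hsub, ← intervalIntegral.integral_const_mul]
  refine intervalIntegral.integral_congr fun θ hθ => ?_
  rw [Set.uIcc_of_le Real.pi_pos.le] at hθ
  have hsin := Real.sin_nonneg_of_mem_Icc hθ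
  have hx : ((1 + Real.sqrt α) ^ 2 - (1 + α - 2 * Real.sqrt α * Real.cos θ)) *
      (1 + α - 2 * Real.sqrt α * Real.cos θ - (1 - Real.sqrt α) ^ 2) =
      (2 * Real.sqrt α * Real.sin θ) ^ 2 := by
    rw [mul_pow, Real.sin_sq]
    linear_combination (-(Real.sqrt α ^ 2 - α) - 4 * Real.sqrt α * Real.cos θ) * h2
  have hne := ((hsup θ).2.trans_le (hsup θ).1).ne'
  have hpi := Real.pi_pos.ne'
  simp only [Function.comp]
  rw [hx, Real.sqrt_sq (by positivity)]
  have : 2 * Real.sqrt α * Real.sin θ * (2 * Real.sqrt α * Real.sin θ) =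
      4 * α * Real.sin θ ^ 2 := by linear_combination 4 * Real.sin θ ^ 2 * h2
  rw [div_mul_eq_mul_div, this]
  field_simp
  ring

theorem hasSum_mpNegMoment_mul_pow {α : ℝ} (hα0 : 0 < α) (hα1 : α < 1) {x : ℝ}
    (hx : |x| < (1 - Real.sqrt α) ^ 2) :
    HasSum (fun m => mpNegMoment α m * x ^ m) (2 / Real.pi * ∫ θ in (0 : ℝ)..Real.pi,
      Real.sin θ ^ 2 / (1 + α - 2 * Real.sqrt α * Real.cos θ - x)) := by
  have hsup := mp_support_pos hα0 hα1
  have ha := (hsup 0).2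
  set a := (1 - Real.sqrt α) ^ 2
  have hratio : |x| / a < 1 := (div_lt_one ha).2 hx
  have hgeom := summable_geometric_of_lt_one (div_nonneg (abs_nonneg x) ha.le) hratio
  have hterm : ∀ m, mpNegMoment α m * x ^ m = 2 / Real.pi * ∫ θ in (0 : ℝ)..Real.pi,
      Real.sin θ ^ 2 / (1 + α - 2 * Real.sqrt α * Real.cos θ) ^ (m + 1) * x ^ m := by
    intro m
    rw [mpNegMoment_eq_integral_sin hα0 hα1, intervalIntegral.integral_mul_const, mul_assoc]
  simp only [hterm]
  refine HasSum.mul_left _ ?_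
  refine intervalIntegral.hasSum_integral_of_dominated_convergence
    (fun m _ => 1 / a * (|x| / a) ^ m) ?_ ?_ ?_ ?_ ?_
  · intro m
    refine Continuous.aestronglyMeasurable ?_
    refine Continuous.mul (Continuous.div (by fun_prop) (by fun_prop) fun θ => ?_) continuous_const
    exact pow_ne_zero _ (ha.trans_le (hsup θ).1).ne'
  · refine fun m => Eventually.of_forall fun θ _ => ?_
    have ht := (hsup θ).1
    have ht0 := ha.trans_le ht
    rw [norm_mul, norm_div, norm_pow, norm_pow, norm_pow, Real.norm_eq_abs, Real.norm_eq_abs,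
      Real.norm_eq_abs, abs_of_pos ht0, sq_abs]
    have h1 : Real.sin θ ^ 2 / (1 + α - 2 * Real.sqrt α * Real.cos θ) ^ (m + 1) ≤
        1 / a ^ (m + 1) :=
      div_le_div₀ zero_le_one (Real.sin_sq_le_one θ) (by positivity) (by gcongr)
    calc _ ≤ 1 / a ^ (m + 1) * |x| ^ m := by gcongr
      _ = _ := by rw [div_pow, pow_succ]; field_simp
  · exact Eventually.of_forall fun θ _ => hgeom.mul_left _
  · exact intervalIntegrable_const
  · refine Eventually.of_forall fun θ _ => ?_
    have ht := (hsup θ).1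
    have ht0 := ha.trans_le ht
    set t := 1 + α - 2 * Real.sqrt α * Real.cos θ
    have hxt : |x / t| < 1 := by
      rw [abs_div, abs_of_pos ht0, div_lt_one ht0]
      linarith
    have hne : t - x ≠ 0 := by
      have := le_abs_self x
      exact (by linarith : 0 < t - x).ne'
    have h := (hasSum_geometric_of_abs_lt_one hxt).mul_left (Real.sin θ ^ 2 / t)
    have he : Real.sin θ ^ 2 / t * (1 - x / t)⁻¹ = Real.sin θ ^ 2 / (t - x) := by
      rw [one_sub_div ht0.ne', inv_div]
      field_simp
    rw [he] at h
    refine (congrArg (fun f : ℕ → ℝ => HasSum f _) (funext fun m => ?_)).mp h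
    rw [div_pow, pow_succ]
    field_simp
    ring

theorem exists_mp_stieltjes_eq {α : ℝ} (hα0 : 0 < α) (hα1 : α < 1) {x : ℝ} (hx : x ≤ 0) :
    ∃ u, 0 < u ∧ u ≤ 1 ∧ α * u ^ 2 - (1 + α - x) * u + 1 = 0 ∧
      2 / Real.pi * ∫ θ in (0 : ℝ)..Real.pi,
        Real.sin θ ^ 2 / (1 + α - 2 * Real.sqrt α * Real.cos θ - x) = u := by
  have h2 := Real.sq_sqrt hα0.le
  have hr := Real.sqrt_pos.2 hα0
  have hr1 : Real.sqrt α < 1 := by rw [Real.sqrt_lt' one_pos]; simpa using hα1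
  have hdisc : (1 - α) ^ 2 ≤ (1 + α - x) ^ 2 - 4 * α := by nlinarith
  have hw := Real.sq_sqrt ((sq_nonneg _).trans hdisc)
  have hw1 : 1 - α ≤ Real.sqrt ((1 + α - x) ^ 2 - 4 * α) := Real.le_sqrt_of_sq_le hdisc
  set w := Real.sqrt ((1 + α - x) ^ 2 - 4 * α)
  have hden : 2 ≤ 1 + α - x + w := by linarith
  have hden0 : 1 + α - x + w ≠ 0 := by linarith
  obtain ⟨u, hu⟩ : ∃ u, u = 2 / (1 + α - x + w) := ⟨_, rfl⟩
  have hu0 : 0 < u := by rw [hu]; exact div_pos two_pos (by linarith)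
  have hu1 : u ≤ 1 := by rw [hu, div_le_one (by linarith)]; exact hden
  have hquad : α * u ^ 2 - (1 + α - x) * u + 1 = 0 := by
    rw [hu]
    field_simp
    linear_combination hw
  refine ⟨u, hu0, hu1, hquad, ?_⟩
  have hint := integral_sin_sq_div_poisson (q := Real.sqrt α * u) (mul_pos hr hu0)
    (by nlinarith)
  have hcongr : ∀ θ, Real.sin θ ^ 2 / (1 + α - 2 * Real.sqrt α * Real.cos θ - x) =
      u * (Real.sin θ ^ 2 / (1 + (Real.sqrt α * u) ^ 2 -
        2 * (Real.sqrt α * u) * Real.cos θ)) := by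
    intro θ
    have : 1 + (Real.sqrt α * u) ^ 2 - 2 * (Real.sqrt α * u) * Real.cos θ =
        u * (1 + α - 2 * Real.sqrt α * Real.cos θ - x) := by
      linear_combination u ^ 2 * h2 + hquad
    rw [this, ← mul_div_assoc, mul_div_mul_left _ _ hu0.ne']
  simp only [hcongr]
  rw [intervalIntegral.integral_const_mul, hint]
  have := Real.pi_pos.ne'
  field_simp

theorem mpNegMoment_zero {α : ℝ} (hα0 : 0 < α) (hα1 : α < 1) : mpNegMoment α 0 = 1 := by
  obtain ⟨u, hu0, hu1, hq, hi⟩ := exists_mp_stieltjes_eq hα0 hα1 le_rfl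
  rw [mpNegMoment_eq_integral_sin hα0 hα1]
  simp only [sub_zero, zero_add, pow_one] at hi hq ⊢
  rw [hi]
  have h : (α * u - 1) * (u - 1) = 0 := by linear_combination hq
  have h1 : α * u - 1 ≠ 0 := by nlinarith
  linarith [(mul_eq_zero.1 h).resolve_left h1]

/-- Coefficients of a power series solving `α S² - (1 + α - x) S + 1 = 0`. -/
theorem quadratic_power_series_coeff_succ {α a : ℝ} (ha : 0 < a) {c : ℕ → ℝ} {S : ℝ → ℝ}
    (hc0 : c 0 = 1) (hS : ∀ x : ℝ, |x| < a → HasSum (fun m => c m * x ^ m) (S x))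
    (hq : ∀ x < 0, α * S x ^ 2 - (1 + α - x) * S x + 1 = 0) (M : ℕ) :
    (1 - α) * c (M + 1) = c M + α * ∑ l ∈ Finset.range M, c (M - l) * c (l + 1) := by
  set shift : ℕ → ℝ := fun m => Nat.casesOn m 0 c with hshift
  set d : ℕ → ℝ := fun m => α * ∑ k ∈ Finset.range (m + 1), c k * c (m - k) - (1 + α) * c m +
    shift m + (if m = 0 then 1 else 0) with hd
  set Φ : ℝ → ℝ := fun x => α * (S x * S x) - (1 + α) * S x + x * S x + 1 with hΦ
  have hsum : ∀ x : ℝ, |x| < a → HasSum (fun m => d m * x ^ m) (Φ x) := by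
    intro x hx
    have h1 := hS x hx
    have hn := summable_norm_iff.2 h1.summable
    have h2 := hasSum_sum_range_mul_of_summable_norm hn hn
    rw [h1.tsum_eq] at h2
    have h3 : HasSum (fun m => shift m * x ^ m) (x * S x) := by
      rw [← hasSum_nat_add_iff' 1]
      simpa [hshift, pow_succ', mul_left_comm] using h1.mul_left x
    have h4 : HasSum (fun m => (if m = 0 then 1 else 0) * x ^ m) 1 := by
      refine (congrArg (fun f : ℕ → ℝ => HasSum f _) (funext fun m => ?_)).mp
        (hasSum_ite_eq 0 (1 : ℝ))
      by_cases hm : m = 0 <;> simp [hm]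
    refine (congrArg (fun f : ℕ → ℝ => HasSum f _) (funext fun m => ?_)).mp
      ((((h2.mul_left α).sub (h1.mul_left (1 + α))).add h3).add h4)
    have : ∑ k ∈ Finset.range (m + 1), c k * x ^ k * (c (m - k) * x ^ (m - k)) =
        (∑ k ∈ Finset.range (m + 1), c k * c (m - k)) * x ^ m := by
      rw [Finset.sum_mul]
      refine Finset.sum_congr rfl fun k hk => ?_
      rw [← Nat.add_sub_cancel' (Nat.lt_succ_iff.1 (Finset.mem_range.1 hk)), pow_add,
        Nat.add_sub_cancel_left]
      ring
    rw [this]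
    simp only [hd]
    ring
  have hps : HasFPowerSeriesAt Φ (FormalMultilinearSeries.ofScalars ℝ d) 0 := by
    rw [hasFPowerSeriesAt_iff]
    have : ∀ᶠ x : ℝ in nhds 0, |x| < a :=
      continuous_abs.continuousAt.eventually_lt continuousAt_const (by simpa using ha)
    filter_upwards [this] with x hx
    simpa [FormalMultilinearSeries.coeff_ofScalars, mul_comm] using hsum x hx
  have hzero : ∀ᶠ x in nhds 0, Φ x = 0 := by
    refine hps.analyticAt.frequently_zero_iff_eventually_zero.1 ?_
    have : ∃ᶠ x : ℝ in nhdsWithin 0 (Set.Iio 0), Φ x = 0 := by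
      refine Eventually.frequently ?_
      filter_upwards [self_mem_nhdsWithin] with x hx
      simp only [hΦ]
      linear_combination hq x hx
    exact this.filter_mono (nhdsWithin_mono _ fun x hx => ne_of_lt hx)
  have hd0 : d (M + 1) = 0 := by
    have := hps.eq_zero_of_eventually hzero
    rw [← FormalMultilinearSeries.coeff_ofScalars (p := d), this]
    rfl
  simp only [hd, hshift] at hd0
  rw [Finset.sum_range_succ', Finset.sum_range_succ] at hd0
  simp only [Nat.sub_zero, Nat.sub_self, hc0, Nat.add_sub_add_right, Nat.succ_ne_zero,
    if_false] at hd0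
  have hcomm : ∑ l ∈ Finset.range M, c (M - l) * c (l + 1) =
      ∑ l ∈ Finset.range M, c (l + 1) * c (M - l) :=
    Finset.sum_congr rfl fun l _ => mul_comm _ _
  rw [hcomm]
  linear_combination -hd0

theorem mpNegMoment_succ {α : ℝ} (hα0 : 0 < α) (hα1 : α < 1) (M : ℕ) :
    (1 - α) * mpNegMoment α (M + 1) = mpNegMoment α M +
      α * ∑ l ∈ Finset.range M, mpNegMoment α (M - l) * mpNegMoment α (l + 1) := by
  refine quadratic_power_series_coeff_succ (mp_support_pos hα0 hα1 0).2
    (mpNegMoment_zero hα0 hα1) (fun x hx => hasSum_mpNegMoment_mul_pow hα0 hα1 hx)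
    (fun x hx => ?_) M
  obtain ⟨u, -, -, hq, hi⟩ := exists_mp_stieltjes_eq hα0 hα1 (le_of_lt hx)
  rwa [hi]

end MarchenkoPastur

/-! ### Uniform bounds and error terms -/

section MomentBounds

variable {n p : ℕ} {δ : ℝ}

theorem integral_resolventMoment_succ_le (hn : n ≠ 0) (hp : p ≠ 0) (hδ : 0 < δ) (M : ℕ) :
    (1 - (M + 1) * (p + 1) / n) * ∫ Z, resolventMoment δ (M + 1) Z ∂gaussEnsemble n p ≤
      ∫ Z, resolventMoment δ M Z ∂gaussEnsemble n p := by
  have hloop := loop_equation hn hp hδ M []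
  have hcorr : ∀ Z : Fin n → Fin p → ℝ, loopCorrection δ (M + 1) [] Z = 0 := fun Z =>
    le_antisymm (by simpa using loopCorrection_le hp hδ Z (M + 1) [])
      (loopCorrection_nonneg hδ Z (M + 1) [])
  simp only [resolventMomentProd_nil, mul_one, hcorr, mul_zero, sub_zero] at hloop
  calc (1 - (M + 1) * (p + 1) / n) * ∫ Z, resolventMoment δ (M + 1) Z ∂gaussEnsemble n p
      = ∫ Z, (1 - (M + 1) * (p + 1) / n) * resolventMoment δ (M + 1) Z ∂gaussEnsemble n p :=
        (integral_const_mul _ _).symm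
    _ ≤ ∫ Z, wishartResolventMoment δ M Z ∂gaussEnsemble n p := by
        rw [hloop]
        refine integral_mono ((hasAllMoments_resolventMoment hδ (M + 1)).const_mul _).integrable
          (((hasAllMoments_resolventMoment hδ (M + 1)).sub
            ((hasAllMoments_wishartResolventMoment hδ (M + 1)).const_mul _)).sub
            ((HasAllMoments.sum _ fun l _ => (hasAllMoments_wishartResolventMoment hδ (M - l)).mul
              (hasAllMoments_resolventMoment hδ (l + 1))).const_mul _)).integrable fun Z => ?_
        have h1 := wishartResolventMoment_le hδ (M + 1) Z
        have h2 : ∑ l ∈ Finset.range (M + 1),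
            wishartResolventMoment δ (M - l) Z * resolventMoment δ (l + 1) Z ≤
            (M + 1) * resolventMoment δ (M + 1) Z := by
          have : ∀ l ∈ Finset.range (M + 1),
              wishartResolventMoment δ (M - l) Z * resolventMoment δ (l + 1) Z ≤
                resolventMoment δ (M + 1) Z := by
            intro l hl
            have hlM : M - l + (l + 1) = M + 1 := by
              have := Finset.mem_range.1 hl
              omega
            rw [← hlM]
            exact (mul_le_mul_of_nonneg_right (wishartResolventMoment_le hδ _ Z)
              (resolventMoment_nonneg hδ _ Z)).trans (resolventMoment_mul_le hδ _ _ Z)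
          simpa using Finset.sum_le_card_nsmul _ _ _ this
        have h3 : (0 : ℝ) ≤ (M + 1) / n := by positivity
        have h4 : (0 : ℝ) ≤ p / n := by positivity
        have h5 := mul_le_mul_of_nonneg_left h1 h3
        have h6 := mul_le_mul_of_nonneg_left h2 h4
        have h7 : (1 - (M + 1) * (p + 1) / n) * resolventMoment δ (M + 1) Z =
            resolventMoment δ (M + 1) Z - (M + 1) / n * resolventMoment δ (M + 1) Z -
              p / n * ((M + 1) * resolventMoment δ (M + 1) Z) := by ring
        simp only [h7]
        linarith
    _ ≤ _ := integral_mono (hasAllMoments_wishartResolventMoment hδ M).integrable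
        (hasAllMoments_resolventMoment hδ M).integrable fun Z => wishartResolventMoment_le hδ M Z

theorem integral_resolventMoment_le (hn : n ≠ 0) (hp : p ≠ 0) (hδ : 0 < δ) {η : ℝ} (hη : 0 < η)
    (N : ℕ) (hN : η ≤ 1 - N * (p + 1) / n) :
    ∫ Z, resolventMoment δ N Z ∂gaussEnsemble n p ≤ η⁻¹ ^ N := by
  induction N with
  | zero => simp [resolventMoment_zero hp]
  | succ M ih =>
    push_cast at hN
    have hM : η ≤ 1 - M * (p + 1) / n := by
      refine hN.trans ?_
      gcongr
      linarith
    have hstep := integral_resolventMoment_succ_le hn hp hδ M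
    have hnn : 0 ≤ ∫ Z, resolventMoment δ (M + 1) Z ∂gaussEnsemble n p :=
      integral_nonneg fun Z => resolventMoment_nonneg hδ _ Z
    have h := (mul_le_mul_of_nonneg_right hN hnn).trans (hstep.trans (ih hM))
    rw [pow_succ, ← div_eq_mul_inv, le_div_iff₀ hη]
    linarith

/-- Quantitative form of the loop equation, with all error terms controlled by a bound `K` on the
expected resolvent moments. -/
theorem abs_loop_equation_error_le (hn : n ≠ 0) (hp : p ≠ 0) (hδ : 0 < δ) (M : ℕ) (L : List ℕ)
    {K : ℝ} (hK : ∫ Z, resolventMoment δ (M + 1 + L.sum) Z ∂gaussEnsemble n p ≤ K)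
    (hK' : ∫ Z, resolventMoment δ (M + 2 + L.sum) Z ∂gaussEnsemble n p ≤ K) :
    |(1 - p / n) * ∫ Z, resolventMomentProd δ ((M + 1) :: L) Z ∂gaussEnsemble n p
      - ∫ Z, resolventMomentProd δ (M :: L) Z ∂gaussEnsemble n p
      - p / n * ∑ l ∈ Finset.range M,
        ∫ Z, resolventMomentProd δ ((M - l) :: (l + 1) :: L) Z ∂gaussEnsemble n p| ≤
    (δ + (M + 1) / n + 1 / (n * p) * (2 * L.sum) + p / n * δ * (M + 1)) * K := by
  have hloop := loop_equation hn hp hδ M L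
  set F : (Fin n → Fin p → ℝ) → ℝ := resolventMomentProd δ L with hF
  have hP : ∀ L, HasAllMoments fun Z : Fin n → Fin p → ℝ => resolventMomentProd δ L Z :=
    fun L => hasAllMoments_resolventMomentProd hδ L
  set W : (Fin n → Fin p → ℝ) → ℝ := fun Z =>
    (wishartResolventMoment δ M Z * F Z) - ((resolventMoment δ (M + 1) Z -
      (M + 1) / n * wishartResolventMoment δ (M + 1) Z -
      p / n * ∑ l ∈ Finset.range (M + 1), wishartResolventMoment δ (M - l) Z *
        resolventMoment δ (l + 1) Z) * F Z - 1 / (n * p) * loopCorrection δ (M + 1) L Z) with hW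
  set X : (Fin n → Fin p → ℝ) → ℝ := fun Z =>
    (1 - p / n) * resolventMomentProd δ ((M + 1) :: L) Z - resolventMomentProd δ (M :: L) Z -
      p / n * ∑ l ∈ Finset.range M, resolventMomentProd δ ((M - l) :: (l + 1) :: L) Z with hX
  have hlhs := (hasAllMoments_wishartResolventMoment (n := n) (p := p) hδ M).mul (hP L)
  have hrhs := ((((hasAllMoments_resolventMoment (n := n) (p := p) hδ (M + 1)).sub
      ((hasAllMoments_wishartResolventMoment hδ (M + 1)).const_mul ((M + 1) / n))).sub
      ((HasAllMoments.sum (Finset.range (M + 1)) fun l _ =>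
        (hasAllMoments_wishartResolventMoment hδ (M - l)).mul
        (hasAllMoments_resolventMoment hδ (l + 1))).const_mul (p / n))).mul (hP L)).sub
      ((hasAllMoments_loopCorrection hδ (M + 1) L).const_mul (1 / (n * p)))
  have hWm : HasAllMoments W := hlhs.sub hrhs
  have hsumm : HasAllMoments fun Z : Fin n → Fin p → ℝ => ∑ l ∈ Finset.range M,
      resolventMomentProd δ ((M - l) :: (l + 1) :: L) Z := HasAllMoments.sum _ fun l _ => hP _
  have hXm : HasAllMoments X := (((hP _).const_mul _).sub (hP _)).sub (hsumm.const_mul _)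
  have hW0 : ∫ Z, W Z ∂gaussEnsemble n p = 0 := by
    rw [hW, integral_sub hlhs.integrable hrhs.integrable, hloop, sub_self]
  have hXint : ∫ Z, X Z ∂gaussEnsemble n p =
      (1 - p / n) * ∫ Z, resolventMomentProd δ ((M + 1) :: L) Z ∂gaussEnsemble n p
      - ∫ Z, resolventMomentProd δ (M :: L) Z ∂gaussEnsemble n p
      - p / n * ∑ l ∈ Finset.range M,
        ∫ Z, resolventMomentProd δ ((M - l) :: (l + 1) :: L) Z ∂gaussEnsemble n p := by
    rw [hX, integral_sub (((hP _).const_mul _).sub (hP _)).integrable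
      (hsumm.const_mul _).integrable, integral_sub ((hP _).const_mul _).integrable
      (hP _).integrable, integral_const_mul, integral_const_mul,
      integral_finsetSum _ fun l _ => (hP _).integrable]
  have hXW : ∫ Z, X Z ∂gaussEnsemble n p = ∫ Z, (X Z + W Z) ∂gaussEnsemble n p := by
    rw [integral_add hXm.integrable hWm.integrable, hW0, add_zero]
  have hpt : ∀ Z, |X Z + W Z| ≤
      (δ + (M + 1) / n + 1 / (n * p) * (2 * L.sum)) * resolventMoment δ (M + 1 + L.sum) Z +
        p / n * δ * (M + 1) * resolventMoment δ (M + 2 + L.sum) Z := by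
    intro Z
    have hXWeq : X Z + W Z = (M + 1) / n * (wishartResolventMoment δ (M + 1) Z * F Z) +
        1 / (n * p) * loopCorrection δ (M + 1) L Z -
        (δ * resolventMomentProd δ ((M + 1) :: L) Z + p / n * δ * ∑ l ∈ Finset.range (M + 1),
          resolventMomentProd δ ((M - l + 1) :: (l + 1) :: L) Z) := by
      have hsplit : (∑ l ∈ Finset.range (M + 1), wishartResolventMoment δ (M - l) Z *
          resolventMoment δ (l + 1) Z) * F Z =
          ∑ l ∈ Finset.range M, resolventMomentProd δ ((M - l) :: (l + 1) :: L) Z +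
          resolventMomentProd δ ((M + 1) :: L) Z - δ * ∑ l ∈ Finset.range (M + 1),
          resolventMomentProd δ ((M - l + 1) :: (l + 1) :: L) Z := by
        have h0 : resolventMomentProd δ ((M + 1) :: L) Z =
            resolventMomentProd δ ((M - M) :: (M + 1) :: L) Z := by
          rw [Nat.sub_self, resolventMomentProd_cons δ 0, resolventMoment_zero hp, one_mul]
        rw [h0, ← Finset.sum_range_succ
          (fun l => resolventMomentProd δ ((M - l) :: (l + 1) :: L) Z), Finset.mul_sum,
          ← Finset.sum_sub_distrib, Finset.sum_mul]
        refine Finset.sum_congr rfl fun l _ => ?_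
        simp only [resolventMomentProd_cons, wishartResolventMoment, hF]
        ring
      have e1 : resolventMomentProd δ ((M + 1) :: L) Z = resolventMoment δ (M + 1) Z * F Z :=
        resolventMomentProd_cons δ (M + 1) L Z
      have e2 : resolventMomentProd δ (M :: L) Z = resolventMoment δ M Z * F Z :=
        resolventMomentProd_cons δ M L Z
      have e3 : wishartResolventMoment δ M Z =
        resolventMoment δ M Z - δ * resolventMoment δ (M + 1) Z := rfl
      simp only [hX, hW]
      linear_combination (p / n : ℝ) * hsplit + (1 + δ) * e1 - e2 + F Z * e3
    have hF0 := resolventMomentProd_nonneg hδ L Z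
    have hT : resolventMomentProd δ ((M + 1) :: L) Z ≤ resolventMoment δ (M + 1 + L.sum) Z := by
      simpa using resolventMomentProd_le hp hδ ((M + 1) :: L) Z
    have hT0 := resolventMomentProd_nonneg hδ ((M + 1) :: L) Z
    have hy0 : 0 ≤ wishartResolventMoment δ (M + 1) Z * F Z :=
      mul_nonneg (wishartResolventMoment_nonneg hδ _ Z) hF0
    have hy : wishartResolventMoment δ (M + 1) Z * F Z ≤ resolventMoment δ (M + 1 + L.sum) Z := by
      refine le_trans ?_ hT
      rw [resolventMomentProd_cons]
      exact mul_le_mul_of_nonneg_right (wishartResolventMoment_le hδ _ Z) hF0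
    have hS0 : 0 ≤ ∑ l ∈ Finset.range (M + 1),
          resolventMomentProd δ ((M - l + 1) :: (l + 1) :: L) Z :=
      Finset.sum_nonneg fun l _ => resolventMomentProd_nonneg hδ _ Z
    have hS : ∑ l ∈ Finset.range (M + 1),
          resolventMomentProd δ ((M - l + 1) :: (l + 1) :: L) Z ≤
          (M + 1) * resolventMoment δ (M + 2 + L.sum) Z := by
      have : ∀ l ∈ Finset.range (M + 1), resolventMomentProd δ ((M - l + 1) :: (l + 1) :: L) Z ≤
          resolventMoment δ (M + 2 + L.sum) Z := by
        intro l hl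
        have hlM : M + 2 + L.sum = ((M - l + 1) :: (l + 1) :: L).sum := by
          have := Finset.mem_range.1 hl
          simp only [List.sum_cons]
          omega
        rw [hlM]
        exact resolventMomentProd_le hp hδ _ Z
      simpa using Finset.sum_le_card_nsmul _ _ _ this
    have hC0 := loopCorrection_nonneg hδ Z (M + 1) L
    have hC := loopCorrection_le hp hδ Z (M + 1) L
    have c1 : (0 : ℝ) ≤ (M + 1) / n := by positivity
    have c2 : (0 : ℝ) ≤ 1 / (n * p) := by positivity
    have c3 : (0 : ℝ) ≤ p / n * δ := by positivity
    have b1 := mul_le_mul_of_nonneg_left hy c1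
    have b2 := mul_le_mul_of_nonneg_left hC c2
    have b3 := mul_le_mul_of_nonneg_left hT hδ.le
    have b4 := mul_le_mul_of_nonneg_left hS c3
    have a1 := mul_nonneg c1 hy0
    have a2 := mul_nonneg c2 hC0
    have a3 := mul_nonneg hδ.le hT0
    have a4 := mul_nonneg c3 hS0
    rw [hXWeq, abs_le]
    constructor <;> nlinarith
  rw [← hXint, hXW]
  have hb1 := (hasAllMoments_resolventMoment (n := n) (p := p) hδ (M + 1 + L.sum)).const_mul
    (δ + (M + 1) / n + 1 / (n * p) * (2 * L.sum))
  have hb2 := (hasAllMoments_resolventMoment (n := n) (p := p) hδ (M + 2 + L.sum)).const_mul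
    (p / n * δ * (M + 1))
  calc |∫ Z, (X Z + W Z) ∂gaussEnsemble n p|
      ≤ ∫ Z, |X Z + W Z| ∂gaussEnsemble n p := abs_integral_le_integral_abs
    _ ≤ ∫ Z, ((δ + (M + 1) / n + 1 / (n * p) * (2 * L.sum)) *
          resolventMoment δ (M + 1 + L.sum) Z +
        p / n * δ * (M + 1) * resolventMoment δ (M + 2 + L.sum) Z) ∂gaussEnsemble n p :=
        integral_mono (hXm.add hWm).integrable.abs (hb1.add hb2).integrable hpt
    _ ≤ _ := by
        rw [integral_add hb1.integrable hb2.integrable, integral_const_mul, integral_const_mul,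
          add_mul _ _ K]
        gcongr

end MomentBounds

/-! ### Limits of the regularised moments -/

section Limits

variable {α : ℝ} {p : ℕ → ℕ} {s : ℕ} {K : ℝ}

/-- The expected product of resolvent moments at regularisation `1 / (n + 1)` converges to the
product of the corresponding Marchenko–Pastur moments. -/
def TendstoMPMoments (α : ℝ) (p : ℕ → ℕ) (L : List ℕ) : Prop :=
  Tendsto (fun n : ℕ => ∫ Z, resolventMomentProd (1 / ((n : ℝ) + 1)) L Z ∂gaussEnsemble n (p n))
    atTop (nhds (L.map (mpNegMoment α)).prod)

theorem eventually_ne_zero_of_tendsto (hpinf : Tendsto (fun n => (p n : ℝ)) atTop atTop) :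
    ∀ᶠ n in atTop, p n ≠ 0 := by
  filter_upwards [hpinf.eventually_gt_atTop 0] with n hn
  exact_mod_cast hn.ne'

theorem TendstoMPMoments.succ_cons (hα0 : 0 < α) (hα1 : α < 1)
    (hpinf : Tendsto (fun n => (p n : ℝ)) atTop atTop)
    (hα : Tendsto (fun n => (p n : ℝ) / (n : ℝ)) atTop (nhds α))
    (hK : ∀ᶠ n : ℕ in atTop, ∀ N ≤ s + 1,
      ∫ Z, resolventMoment (1 / ((n : ℝ) + 1)) N Z ∂gaussEnsemble n (p n) ≤ K)
    (M : ℕ) (L : List ℕ) (hs : M + 1 + L.sum ≤ s) (h1 : TendstoMPMoments α p (M :: L))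
    (h2 : ∀ l < M, TendstoMPMoments α p ((M - l) :: (l + 1) :: L)) :
    TendstoMPMoments α p ((M + 1) :: L) := by
  set A : List ℕ → ℕ → ℝ := fun L n =>
    ∫ Z, resolventMomentProd (1 / ((n : ℝ) + 1)) L Z ∂gaussEnsemble n (p n) with hA
  set err : ℕ → ℝ := fun n => (1 - p n / n) * A ((M + 1) :: L) n - A (M :: L) n -
    p n / n * ∑ l ∈ Finset.range M, A ((M - l) :: (l + 1) :: L) n with herr
  have hδ0 : Tendsto (fun n : ℕ => 1 / ((n : ℝ) + 1)) atTop (nhds 0) :=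
    tendsto_one_div_add_atTop_nhds_zero_nat
  have hn0 : Tendsto (fun n : ℕ => ((M : ℝ) + 1) / n) atTop (nhds 0) :=
    tendsto_const_div_atTop_nhds_zero_nat _
  have hnp0 : Tendsto (fun n : ℕ => 1 / ((n : ℝ) * p n)) atTop (nhds 0) := by
    simpa only [one_div, Function.comp_def] using
      tendsto_inv_atTop_zero.comp (tendsto_natCast_atTop_atTop.atTop_mul_atTop₀ hpinf)
  have herr0 : Tendsto err atTop (nhds 0) := by
    have hlim := (((hδ0.add hn0).add (hnp0.mul_const (2 * (L.sum : ℝ)))).add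
      ((hα.mul hδ0).mul_const ((M : ℝ) + 1))).mul_const K
    simp only [add_zero, zero_mul, mul_zero] at hlim
    refine squeeze_zero_norm' ?_ hlim
    filter_upwards [hK, eventually_ne_zero_of_tendsto hpinf, eventually_ne_atTop 0]
      with n hKn hp hn
    exact abs_loop_equation_error_le hn hp (by positivity) M L (hKn _ (by omega))
      (hKn _ (by omega))
  have hsum : Tendsto (fun n => ∑ l ∈ Finset.range M, A ((M - l) :: (l + 1) :: L) n) atTop
      (nhds (∑ l ∈ Finset.range M, (((M - l) :: (l + 1) :: L).map (mpNegMoment α)).prod)) :=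
    tendsto_finsetSum _ fun l hl => h2 l (Finset.mem_range.1 hl)
  have hden : Tendsto (fun n => 1 - (p n : ℝ) / n) atTop (nhds (1 - α)) := hα.const_sub 1
  have hα1' : 1 - α ≠ 0 := by linarith
  have hfinal := ((herr0.add h1).add (hα.mul hsum)).div hden hα1'
  have hval : (0 + ((M :: L).map (mpNegMoment α)).prod + α * ∑ l ∈ Finset.range M,
      (((M - l) :: (l + 1) :: L).map (mpNegMoment α)).prod) / (1 - α) =
      (((M + 1) :: L).map (mpNegMoment α)).prod := by
    simp only [List.map_cons, List.prod_cons]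
    simp only [← mul_assoc]
    rw [← Finset.sum_mul]
    field_simp
    linear_combination -(L.map (mpNegMoment α)).prod * mpNegMoment_succ hα0 hα1 M
  rw [hval] at hfinal
  refine hfinal.congr' ?_
  filter_upwards [hden.eventually_ne hα1'] with n hn
  rw [Pi.div_apply, div_eq_iff hn]
  simp only [herr, hA]
  ring

theorem tendstoMPMoments_of_sum_le (hα0 : 0 < α) (hα1 : α < 1)
    (hpinf : Tendsto (fun n => (p n : ℝ)) atTop atTop)
    (hα : Tendsto (fun n => (p n : ℝ) / (n : ℝ)) atTop (nhds α))
    (hK : ∀ᶠ n : ℕ in atTop, ∀ N ≤ s + 1,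
      ∫ Z, resolventMoment (1 / ((n : ℝ) + 1)) N Z ∂gaussEnsemble n (p n) ≤ K)
    (L : List ℕ) (hL : L.sum ≤ s) : TendstoMPMoments α p L := by
  induction hN : L.sum using Nat.strong_induction_on generalizing L with
  | _ N ihN =>
    have hsucc : ∀ M, ∀ L : List ℕ, M + 1 + L.sum = N → TendstoMPMoments α p ((M + 1) :: L) := by
      intro M
      induction M using Nat.strong_induction_on with
      | _ M ihM =>
        intro L hML
        refine TendstoMPMoments.succ_cons hα0 hα1 hpinf hα hK M L (by omega) ?_ fun l hl => ?_
        · exact ihN (M + L.sum) (by omega) _ (by simp; omega) (by simp)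
        · have h := ihM (M - l - 1) (by omega) ((l + 1) :: L) (by simp; omega)
          rwa [Nat.sub_add_cancel (by omega)] at h
    clear ihN
    induction L with
    | nil => simp [TendstoMPMoments, resolventMomentProd_nil]
    | cons m L ihL =>
      rcases m with _ | M
      · have h := ihL (by simpa using hL) (by simpa using hN)
        refine Tendsto.congr' ?_ (by simpa [TendstoMPMoments, mpNegMoment_zero hα0 hα1] using h)
        filter_upwards [eventually_ne_zero_of_tendsto hpinf] with n hp
        simp only [resolventMomentProd_cons, resolventMoment_zero hp, one_mul, one_div]
      · exact hsucc M L (by simpa using hN)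

end Limits

/-! ### Removing the regularisation -/

section RemoveRegularisation

theorem inv_pow_sub_inv_add_pow_le {x δ : ℝ} (hx : 0 < x) (hδ : 0 < δ) (s : ℕ) :
    x⁻¹ ^ s - (x + δ)⁻¹ ^ s ≤ s * δ * x⁻¹ ^ (s + 1) := by
  induction s with
  | zero => simp
  | succ s ih =>
    have ha : 0 < x⁻¹ := inv_pos.2 hx
    have hb : 0 < (x + δ)⁻¹ := inv_pos.2 (by linarith)
    have hba : (x + δ)⁻¹ ≤ x⁻¹ := inv_anti₀ hx (by linarith)
    have hdiff : x⁻¹ - (x + δ)⁻¹ = δ * (x⁻¹ * (x + δ)⁻¹) := by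
      have : x + δ ≠ 0 := by linarith
      field_simp
      ring
    have h1 : x⁻¹ - (x + δ)⁻¹ ≤ δ * (x⁻¹ * x⁻¹) := by
      rw [hdiff]
      gcongr
    have h2 : (x + δ)⁻¹ ^ s * (x⁻¹ - (x + δ)⁻¹) ≤ x⁻¹ ^ s * (δ * (x⁻¹ * x⁻¹)) :=
      mul_le_mul (pow_le_pow_left₀ hb.le hba s) h1 (by linarith) (by positivity)
    have h3 := mul_le_mul_of_nonneg_left ih ha.le
    have h4 : x⁻¹ ^ (s + 1) - (x + δ)⁻¹ ^ (s + 1) =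
        x⁻¹ * (x⁻¹ ^ s - (x + δ)⁻¹ ^ s) + (x + δ)⁻¹ ^ s * (x⁻¹ - (x + δ)⁻¹) := by ring
    rw [h4]
    push_cast
    calc _ ≤ x⁻¹ * (s * δ * x⁻¹ ^ (s + 1)) + x⁻¹ ^ s * (δ * (x⁻¹ * x⁻¹)) := add_le_add h3 h2
      _ = _ := by ring

variable {n p : ℕ}

/-- The resolvent moments of `Z` are power sums over strictly positive eigenvalues, also at
regularisation zero. -/
def HasPosEigenvalues (Z : Fin n → Fin p → ℝ) : Prop :=
  ∃ ev : Fin p → ℝ, (∀ i, 0 < ev i) ∧ ∀ δ : ℝ, 0 ≤ δ → ∀ k : ℕ,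
    resolventMoment δ k Z = (∑ i, (ev i + δ)⁻¹ ^ k) / p

theorem hasPosEigenvalues_of_frequently_le (hp : p ≠ 0) {Z : Fin n → Fin p → ℝ} {N : ℕ} {C : ℝ}
    (h : ∃ᶠ k : ℕ in atTop, resolventMoment (1 / ((k : ℝ) + 1)) (N + 1) Z ≤ C) :
    HasPosEigenvalues Z := by
  obtain ⟨ev, hev0, hev⟩ := exists_eigenvalues_resolventMoment Z
  suffices hpos : ∀ i, 0 < ev i from
    ⟨ev, hpos, fun δ hδ k => hev δ (fun i => (add_pos_of_pos_of_nonneg (hpos i) hδ).ne') k⟩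
  intro i
  by_contra hi
  have hi0 : ev i = 0 := le_antisymm (not_lt.1 hi) (hev0 i)
  have hp0 : (0 : ℝ) < p := by exact_mod_cast Nat.pos_of_ne_zero hp
  obtain ⟨k, hk, hkC⟩ := (h.and_eventually
    (tendsto_natCast_atTop_atTop.eventually_gt_atTop (C * p))).exists
  have hδ : (0 : ℝ) < 1 / ((k : ℝ) + 1) := by positivity
  have hpos : ∀ j, 0 < ev j + 1 / ((k : ℝ) + 1) := fun j => add_pos_of_nonneg_of_pos (hev0 j) hδ
  rw [hev _ fun j => (hpos j).ne', div_le_iff₀ hp0] at hk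
  have hle : (ev i + 1 / ((k : ℝ) + 1))⁻¹ ^ (N + 1) ≤
      ∑ j, (ev j + 1 / ((k : ℝ) + 1))⁻¹ ^ (N + 1) :=
    Finset.single_le_sum (f := fun j => (ev j + 1 / ((k : ℝ) + 1))⁻¹ ^ (N + 1))
      (fun j _ => pow_nonneg (inv_nonneg.2 (hpos j).le) _) (Finset.mem_univ i)
  rw [hi0, zero_add, one_div, inv_inv] at hle
  have hk1 : (1 : ℝ) ≤ k + 1 := by linarith [Nat.cast_nonneg (α := ℝ) k]
  have hself : (k : ℝ) + 1 ≤ ((k : ℝ) + 1) ^ (N + 1) := le_self_pow₀ hk1 (Nat.succ_ne_zero N)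
  rw [one_div] at hk
  linarith

namespace HasPosEigenvalues

variable {Z : Fin n → Fin p → ℝ}

theorem tendsto_resolventMoment (hZ : HasPosEigenvalues Z) (k : ℕ) :
    Tendsto (fun j : ℕ => resolventMoment (1 / ((j : ℝ) + 1)) k Z) atTop
      (nhds (resolventMoment 0 k Z)) := by
  obtain ⟨ev, hpos, hev⟩ := hZ
  rw [hev 0 le_rfl]
  have hrw : ∀ j : ℕ, resolventMoment (1 / ((j : ℝ) + 1)) k Z =
      (∑ i, (ev i + 1 / ((j : ℝ) + 1))⁻¹ ^ k) / p := fun j => hev _ (by positivity) k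
  simp only [hrw]
  refine (tendsto_finsetSum _ fun i _ => ?_).div_const _
  refine Tendsto.pow (Tendsto.inv₀ ?_ (by simpa using (hpos i).ne')) k
  exact tendsto_one_div_add_atTop_nhds_zero_nat.const_add (ev i)

theorem resolventMoment_zero_nonneg (hZ : HasPosEigenvalues Z) (k : ℕ) :
    0 ≤ resolventMoment 0 k Z := by
  obtain ⟨ev, hpos, hev⟩ := hZ
  rw [hev 0 le_rfl]
  have : ∀ i, 0 ≤ (ev i + 0)⁻¹ := fun i => inv_nonneg.2 (by linarith [hpos i])
  exact div_nonneg (Finset.sum_nonneg fun i _ => pow_nonneg (this i) k) (Nat.cast_nonneg p)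

theorem resolventMoment_le_zero (hZ : HasPosEigenvalues Z) {δ : ℝ} (hδ : 0 < δ) (k : ℕ) :
    resolventMoment δ k Z ≤ resolventMoment 0 k Z := by
  obtain ⟨ev, hpos, hev⟩ := hZ
  rw [hev 0 le_rfl, hev δ hδ.le]
  gcongr with i
  · have := hpos i
    positivity
  · linarith [hpos i]

theorem resolventMoment_zero_sub_le (hZ : HasPosEigenvalues Z) {δ : ℝ} (hδ : 0 < δ) (k : ℕ) :
    resolventMoment 0 k Z - resolventMoment δ k Z ≤ k * δ * resolventMoment 0 (k + 1) Z := by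
  obtain ⟨ev, hpos, hev⟩ := hZ
  rw [hev 0 le_rfl, hev 0 le_rfl, hev δ hδ.le, ← sub_div, ← mul_div_assoc,
    ← Finset.sum_sub_distrib, Finset.mul_sum]
  gcongr with i
  simpa using inv_pow_sub_inv_add_pow_le (hpos i) hδ k

end HasPosEigenvalues

theorem continuous_resolventMoment {δ : ℝ} (hδ : 0 < δ) (k : ℕ) :
    Continuous fun Z : Fin n → Fin p → ℝ => resolventMoment δ k Z :=
  (((continuous_wishartResolvent hδ).pow k).matrix_trace).div_const _

theorem ae_hasPosEigenvalues_and_integrable (hp : p ≠ 0) {s : ℕ} {K : ℝ}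
    (hK : ∀ δ : ℝ, 0 < δ → ∫ Z, resolventMoment δ (s + 1) Z ∂gaussEnsemble n p ≤ K) :
    (∀ᵐ Z ∂gaussEnsemble n p, HasPosEigenvalues Z) ∧
      Integrable (fun Z => resolventMoment 0 (s + 1) Z) (gaussEnsemble n p) ∧
      ∫ Z, resolventMoment 0 (s + 1) Z ∂gaussEnsemble n p ≤ K := by
  have hδ : ∀ k : ℕ, (0 : ℝ) < 1 / ((k : ℝ) + 1) := fun k => by positivity
  set f : ℕ → (Fin n → Fin p → ℝ) → ENNReal := fun k Z =>
    ENNReal.ofReal (resolventMoment (1 / ((k : ℝ) + 1)) (s + 1) Z) with hf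
  have hfm : ∀ k, Measurable (f k) := fun k =>
    (continuous_resolventMoment (hδ k) (s + 1)).measurable.ennreal_ofReal
  have hK0 : 0 ≤ K := (integral_nonneg fun Z => resolventMoment_nonneg one_pos _ Z).trans
    (hK 1 one_pos)
  have hfK : ∀ k, ∫⁻ Z, f k Z ∂gaussEnsemble n p ≤ ENNReal.ofReal K := by
    intro k
    rw [hf, ← ofReal_integral_eq_lintegral_ofReal
      (hasAllMoments_resolventMoment (hδ k) (s + 1)).integrable
      (Eventually.of_forall fun Z => resolventMoment_nonneg (hδ k) _ Z)]
    exact ENNReal.ofReal_le_ofReal (hK _ (hδ k))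
  have hfatou : ∫⁻ Z, liminf (fun k => f k Z) atTop ∂gaussEnsemble n p ≤ ENNReal.ofReal K :=
    (lintegral_liminf_le hfm).trans
      (liminf_le_of_frequently_le' (Frequently.of_forall hfK))
  have hae : ∀ᵐ Z ∂gaussEnsemble n p, HasPosEigenvalues Z := by
    filter_upwards [ae_lt_top (Measurable.liminf hfm)
      (hfatou.trans_lt ENNReal.ofReal_lt_top).ne] with Z hZ
    obtain ⟨C, hC, hCtop⟩ := exists_between hZ
    have hfreq := frequently_lt_of_liminf_lt (by isBoundedDefault) hC
    refine hasPosEigenvalues_of_frequently_le hp (N := s) (C := C.toReal)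
      (hfreq.mono fun k hk => ?_)
    exact (ENNReal.ofReal_le_iff_le_toReal hCtop.ne).1 hk.le
  have hnonneg : 0 ≤ᵐ[gaussEnsemble n p] fun Z => resolventMoment 0 (s + 1) Z :=
    hae.mono fun Z hZ => hZ.resolventMoment_zero_nonneg _
  have hmeas : AEStronglyMeasurable (fun Z => resolventMoment 0 (s + 1) Z) (gaussEnsemble n p) :=
    aestronglyMeasurable_of_tendsto_ae atTop
      (fun k : ℕ => (continuous_resolventMoment (hδ k) (s + 1)).aestronglyMeasurable)
      (hae.mono fun Z hZ => hZ.tendsto_resolventMoment _)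
  have hlint : ∫⁻ Z, ENNReal.ofReal (resolventMoment 0 (s + 1) Z) ∂gaussEnsemble n p ≤
      ENNReal.ofReal K := by
    refine le_trans (le_of_eq (lintegral_congr_ae ?_)) hfatou
    filter_upwards [hae] with Z hZ
    exact (ENNReal.tendsto_ofReal (hZ.tendsto_resolventMoment (s + 1))).liminf_eq.symm
  refine ⟨hae, ⟨hmeas, ?_⟩, ?_⟩
  · rw [hasFiniteIntegral_iff_ofReal hnonneg]
    exact hlint.trans_lt ENNReal.ofReal_lt_top
  · rw [integral_eq_lintegral_of_nonneg_ae hnonneg hmeas]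
    exact ENNReal.toReal_le_of_le_ofReal hK0 hlint

theorem abs_integral_resolventMoment_zero_sub_le (hp : p ≠ 0) {s : ℕ} {K : ℝ}
    (hK : ∀ δ : ℝ, 0 < δ → ∫ Z, resolventMoment δ (s + 1) Z ∂gaussEnsemble n p ≤ K)
    {δ : ℝ} (hδ : 0 < δ) :
    |∫ Z, resolventMoment 0 s Z ∂gaussEnsemble n p -
      ∫ Z, resolventMoment δ s Z ∂gaussEnsemble n p| ≤ s * δ * K := by
  obtain ⟨hae, hint, hle⟩ := ae_hasPosEigenvalues_and_integrable hp hK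
  have hδ' : ∀ k : ℕ, (0 : ℝ) < 1 / ((k : ℝ) + 1) := fun k => by positivity
  have hmeas : AEStronglyMeasurable (fun Z => resolventMoment 0 s Z) (gaussEnsemble n p) :=
    aestronglyMeasurable_of_tendsto_ae atTop
      (fun k : ℕ => (continuous_resolventMoment (hδ' k) s).aestronglyMeasurable)
      (hae.mono fun Z hZ => hZ.tendsto_resolventMoment _)
  have hδint : Integrable (fun Z => resolventMoment δ s Z) (gaussEnsemble n p) :=
    (hasAllMoments_resolventMoment hδ s).integrable
  have hbound : Integrable (fun Z => s * δ * resolventMoment 0 (s + 1) Z) (gaussEnsemble n p) :=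
    hint.const_mul _
  have hdiff_nonneg : 0 ≤ᵐ[gaussEnsemble n p]
      fun Z => resolventMoment 0 s Z - resolventMoment δ s Z :=
    hae.mono fun Z hZ => sub_nonneg.2 (hZ.resolventMoment_le_zero hδ s)
  have hdiff_le : (fun Z => resolventMoment 0 s Z - resolventMoment δ s Z) ≤ᵐ[gaussEnsemble n p]
      fun Z => s * δ * resolventMoment 0 (s + 1) Z :=
    hae.mono fun Z hZ => hZ.resolventMoment_zero_sub_le hδ s
  have hdiff : Integrable (fun Z => resolventMoment 0 s Z - resolventMoment δ s Z)
      (gaussEnsemble n p) := by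
    refine hbound.mono' (hmeas.sub hδint.1) ?_
    filter_upwards [hdiff_nonneg, hdiff_le] with Z h0 h1
    rwa [Real.norm_of_nonneg h0]
  have h0int : Integrable (fun Z => resolventMoment 0 s Z) (gaussEnsemble n p) :=
    (hdiff.add hδint).congr (Eventually.of_forall fun Z => by simp)
  rw [← integral_sub h0int hδint, abs_of_nonneg (integral_nonneg_of_ae hdiff_nonneg)]
  refine (integral_mono_ae hdiff hbound hdiff_le).trans ?_
  rw [integral_const_mul]
  gcongr

end RemoveRegularisation

/-- (Marchenko–Pastur limit of inverse Wishart trace moments.)  Let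
`α ∈ (0,1)`, let `s ≥ 1` be an integer with `s < 1/α - 1`, and suppose `p(n) → ∞` and
`p(n)/n → α`.  Then `(1/p(n)) E[tr(Y^{-s})]` converges to
`∫_{α₋}^{α₊} √((α₊-t)(t-α₋))/(2παt^{s+1}) dt`, with `α₊ = (1+√α)²`, `α₋ = (1-√α)²`. -/
theorem inverse_wishart_trace_limit_mp (α : ℝ) (hα0 : 0 < α) (hα1 : α < 1)
    (s : ℕ) (hs : 1 ≤ s) (hsα : (s : ℝ) < 1 / α - 1) (p : ℕ → ℕ)
    (hpinf : Filter.Tendsto (fun n => (p n : ℝ)) Filter.atTop Filter.atTop)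
    (hα : Filter.Tendsto (fun n => (p n : ℝ) / (n : ℝ)) Filter.atTop (nhds α)) :
    Filter.Tendsto (fun n =>
      (1 / (p n : ℝ)) *
        ∫ Z, Matrix.trace ((wishartOf Z)⁻¹ ^ s) ∂gaussEnsemble n (p n))
      Filter.atTop
      (nhds (∫ t in ((1 - Real.sqrt α) ^ 2)..((1 + Real.sqrt α) ^ 2),
        Real.sqrt (((1 + Real.sqrt α) ^ 2 - t) * (t - (1 - Real.sqrt α) ^ 2)) /
          (2 * Real.pi * α * t ^ (s + 1)))) := by
  have hsα' : ((s : ℝ) + 1) * α < 1 := by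
    rw [← lt_div_iff₀ hα0]
    linarith
  obtain ⟨η, hη⟩ : ∃ η, η = (1 - ((s : ℝ) + 1) * α) / 2 := ⟨_, rfl⟩
  have hη0 : 0 < η := by rw [hη]; linarith
  have hη1 : η ≤ 1 := by
    have : 0 ≤ ((s : ℝ) + 1) * α := by positivity
    rw [hη]; linarith
  have hlim : Tendsto (fun n : ℕ => 1 - ((s : ℝ) + 1) * ((p n + 1) / n)) atTop
      (nhds (1 - (s + 1) * α)) := by
    have h1 := hα.add (tendsto_const_div_atTop_nhds_zero_nat (1 : ℝ))
    rw [add_zero] at h1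
    simpa only [← add_div] using (h1.const_mul ((s : ℝ) + 1)).const_sub 1
  have hbound : ∀ᶠ n : ℕ in atTop, p n ≠ 0 ∧ ∀ δ : ℝ, 0 < δ → ∀ N ≤ s + 1,
      ∫ Z, resolventMoment δ N Z ∂gaussEnsemble n (p n) ≤ η⁻¹ ^ (s + 1) := by
    filter_upwards [hlim.eventually_const_le (show η < 1 - (s + 1) * α by rw [hη]; linarith),
      eventually_ne_zero_of_tendsto hpinf, eventually_ne_atTop 0] with n hηn hp hn
    refine ⟨hp, fun δ hδ N hN => ?_⟩
    refine (integral_resolventMoment_le hn hp hδ hη0 N (hηn.trans ?_)).trans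
      (pow_le_pow_right₀ ((one_le_inv₀ hη0).2 hη1) hN)
    rw [mul_div_assoc]
    have hN' : (N : ℝ) ≤ s + 1 := by exact_mod_cast hN
    gcongr
  have hreg : Tendsto (fun n : ℕ =>
      ∫ Z, resolventMoment (1 / ((n : ℝ) + 1)) s Z ∂gaussEnsemble n (p n)) atTop
      (nhds (mpNegMoment α s)) := by
    have h := tendstoMPMoments_of_sum_le (s := s) hα0 hα1 hpinf hα
      (hbound.mono fun n hn N hN => hn.2 _ (by positivity) N hN) [s] (by simp)
    simpa only [TendstoMPMoments, resolventMomentProd_cons, resolventMomentProd_nil, mul_one,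
      List.map_cons, List.map_nil, List.prod_cons, List.prod_nil] using h
  have hdiff : Tendsto (fun n : ℕ => ∫ Z, resolventMoment 0 s Z ∂gaussEnsemble n (p n) -
      ∫ Z, resolventMoment (1 / ((n : ℝ) + 1)) s Z ∂gaussEnsemble n (p n)) atTop (nhds 0) := by
    have h0 := (tendsto_one_div_add_atTop_nhds_zero_nat (𝕜 := ℝ)).const_mul (s : ℝ)
      |>.mul_const (η⁻¹ ^ (s + 1))
    rw [mul_zero, zero_mul] at h0
    refine squeeze_zero_norm' ?_ h0
    filter_upwards [hbound] with n hn
    exact abs_integral_resolventMoment_zero_sub_le hn.1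
      (fun δ hδ => hn.2 δ hδ _ le_rfl) (by positivity)
  have h := hdiff.add hreg
  simp only [sub_add_cancel, zero_add] at h
  refine h.congr fun n => ?_
  rw [← integral_const_mul]
  refine integral_congr_ae (Eventually.of_forall fun Z => ?_)
  simp [resolventMoment, wishartResolvent, div_eq_inv_mul]
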